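/- arXiv:2201.03695 — 9 statements merged into one kernel-verified Lean document; each statement's English description precedes it below -/
import Mathlib

section
/- Let G be a finite group and P a finite T0 topological space equipped with a continuous G-action. Then the equivariant topological complexity of P equals its equivariant combinatorial complexity: TC_G(P) = CC_G(P). -/
/-! ### Module A: equivariant TC / CC / LS for topological G-spaces -/

/-- The zigzag order `0 < 1 > 2 < 3 > ⋯` on natural numbers. -/
def zigzagLE (i j : ℕ) : Prop := i = j ∨ (i % 2 = 0 ∧ (j = i + 1 ∨ i = j + 1))

/-- The combinatorial interval `J m = {0, 1, …, m}`. -/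
def J (m : ℕ) : Type := Fin (m + 1)

namespace J

/-- The underlying natural number of a point of `J m`. -/
def val {m : ℕ} (i : J m) : ℕ := Fin.val i

/-- The initial point `0` of the combinatorial interval. -/
def zero (m : ℕ) : J m := (0 : Fin (m + 1))

/-- The final point `m` of the combinatorial interval. -/
def last (m : ℕ) : J m := Fin.last m

/-- The topology on `J m` whose open sets are the down-closed sets for the zigzag order. -/
instance (m : ℕ) : TopologicalSpace (J m) where
  IsOpen U := ∀ ⦃a⦄, a ∈ U → ∀ ⦃b⦄, zigzagLE (J.val b) (J.val a) → b ∈ U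
  isOpen_univ := fun a _ b _ => Set.mem_univ b
  isOpen_inter := fun s t hs ht a ha b hba => ⟨hs ha.1 hba, ht ha.2 hba⟩
  isOpen_sUnion := fun S hS a ha b hba => by
    obtain ⟨t, htS, hat⟩ := ha
    exact ⟨t, htS, hS t htS hat hba⟩

end J

section Equivariant

variable (G : Type*) [Group G]

/-- A set is `G`-invariant if it is stable under the action of every group element. -/
def GInvariant {α : Type*} [SMul G α] (U : Set α) : Prop :=
  ∀ g : G, ∀ x ∈ U, g • x ∈ U

variable (X : Type*) [TopologicalSpace X] [MulAction G X]

/-- `U ⊆ X × X` admits a continuous equivariant section of the free path fibration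
`π : X^I → X × X`, `α ↦ (α 0, α 1)`. -/
def EqNavigable (U : Set (X × X)) : Prop :=
  ∃ s : U → C(unitInterval, X), Continuous s ∧
    (∀ u : U, s u 0 = (u : X × X).1 ∧ s u 1 = (u : X × X).2) ∧
    (∀ (g : G) (u : U) (h : g • (u : X × X) ∈ U) (t : unitInterval),
      s ⟨g • (u : X × X), h⟩ t = g • s u t)

/-- The equivariant topological complexity: the least `k` such that `X × X` admits a cover by
`k` open invariant sets, each admitting a continuous equivariant section of the free path
fibration; `⊤` if there is no such cover. -/
noncomputable def eqTC : ℕ∞ :=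
  sInf {k : ℕ∞ | ∃ n : ℕ, k = n ∧ ∃ U : Fin n → Set (X × X),
    (∀ i, IsOpen (U i)) ∧ (∀ i, GInvariant G (U i)) ∧ (⋃ i, U i) = Set.univ ∧
    ∀ i, EqNavigable G X (U i)}

/-- `U ⊆ X × X` admits a continuous equivariant section of the combinatorial path fibration
`q_m : X^{J_m} → X × X`, `β ↦ (β 0, β m)`. -/
def EqNavigableJ (m : ℕ) (U : Set (X × X)) : Prop :=
  ∃ s : U → C(J m, X), Continuous s ∧
    (∀ u : U, s u (J.zero m) = (u : X × X).1 ∧ s u (J.last m) = (u : X × X).2) ∧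
    (∀ (g : G) (u : U) (h : g • (u : X × X) ∈ U) (t : J m),
      s ⟨g • (u : X × X), h⟩ t = g • s u t)

/-- The equivariant combinatorial complexity with paths of length `m`: the least `k` such that
`X × X` admits a cover by `k` open invariant sets, each admitting a continuous equivariant
section of the combinatorial path fibration `q_m`; `⊤` if there is no such cover. -/
noncomputable def eqCCm (m : ℕ) : ℕ∞ :=
  sInf {k : ℕ∞ | ∃ n : ℕ, k = n ∧ ∃ U : Fin n → Set (X × X),
    (∀ i, IsOpen (U i)) ∧ (∀ i, GInvariant G (U i)) ∧ (⋃ i, U i) = Set.univ ∧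
    ∀ i, EqNavigableJ G X m (U i)}

/-- The equivariant combinatorial complexity: the minimum over all `m ≥ 1` of `eqCCm`. -/
noncomputable def eqCC : ℕ∞ := ⨅ m : ℕ, eqCCm G X (m + 1)

/-- `U ⊆ X` is `G`-categorical for the orbit of `x₀`: the inclusion of `U` into `X` is
`G`-homotopic to a map taking values in the orbit of `x₀`. -/
def GCategoricalAt (U : Set X) (x₀ : X) : Prop :=
  ∃ F : U × unitInterval → X, Continuous F ∧
    (∀ u : U, F (u, 0) = (u : X)) ∧
    (∀ (g : G) (u : U) (h : g • (u : X) ∈ U) (t : unitInterval),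
      F (⟨g • (u : X), h⟩, t) = g • F (u, t)) ∧
    (∀ u : U, F (u, 1) ∈ MulAction.orbit G x₀)

/-- `U ⊆ X` is `G`-categorical: the inclusion of `U` into `X` is `G`-homotopic to a map taking
values in a single orbit. -/
def GCategorical (U : Set X) : Prop :=
  ∃ x₀ : X, GCategoricalAt G X U x₀

/-- The equivariant Lusternik–Schnirelmann category: the least `k` such that `X` is covered by
`k` open invariant `G`-categorical sets; `⊤` if there is no such cover. -/
noncomputable def eqLS : ℕ∞ :=
  sInf {k : ℕ∞ | ∃ n : ℕ, k = n ∧ ∃ U : Fin n → Set X,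
    (∀ i, IsOpen (U i)) ∧ (∀ i, GInvariant G (U i)) ∧ (⋃ i, U i) = Set.univ ∧
    ∀ i, GCategorical G X (U i)}

end Equivariant

namespace EqTCProof

lemma spec_joined {Y : Type*} [TopologicalSpace Y] {x y : Y} (h : x ⤳ y) : Joined x y :=
  (h.joinedIn (Set.mem_univ x) (Set.mem_univ y)).joined

lemma cont_of_spec {A B : Type*} [TopologicalSpace A] [AlexandrovDiscrete A] [TopologicalSpace B]
    (f : A → B) (h : ∀ x y, x ⤳ y → f x ⤳ f y) : Continuous f := by
  refine ⟨fun s hs => ?_⟩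
  rw [isOpen_iff_forall_specializes]
  intro x y hxy hy
  exact (h x y hxy).mem_open hs hy

instance (m : ℕ) : Finite (J m) := inferInstanceAs (Finite (Fin (m + 1)))

lemma J_spec {m : ℕ} (a b : J m) : a ⤳ b ↔ zigzagLE (J.val a) (J.val b) := by
  constructor
  · intro h
    have hU : IsOpen {c : J m | zigzagLE (J.val c) (J.val b)} := by
      intro c hc d hd
      simp only [Set.mem_ofPred_eq, zigzagLE] at *
      omega
    exact h.mem_open hU (Or.inl rfl)
  · intro h
    rw [specializes_iff_forall_open]
    intro s hs hb
    exact hs hb h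

lemma J_joined (m : ℕ) : Joined (J.zero m) (J.last m) := by
  have key : ∀ k (hk : k < m + 1), Joined (J.zero m) ((⟨k, hk⟩ : Fin (m + 1)) : J m) := by
    intro k
    induction k with
    | zero => intro hk; exact Joined.refl _
    | succ k ih =>
      intro hk
      refine (ih (by omega)).trans ?_
      rcases Nat.even_or_odd k with h | h
      · apply spec_joined
        refine (J_spec _ _).2 ?_
        exact Or.inr ⟨by exact Nat.even_iff.1 h, Or.inl rfl⟩
      · refine Joined.symm (spec_joined ?_)
        refine (J_spec _ _).2 ?_
        refine Or.inr ⟨?_, Or.inr rfl⟩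
        change (k + 1) % 2 = 0
        have := Nat.odd_iff.1 h
        omega
  exact key m (by omega)

lemma nav_of_navJ {G X : Type*} [Group G] [TopologicalSpace X] [MulAction G X] (m : ℕ)
    (U : Set (X × X)) (h : EqNavigableJ G X m U) : EqNavigable G X U := by
  obtain ⟨s, hs, he, hg⟩ := h
  obtain ⟨γ⟩ := J_joined m
  refine ⟨fun u => (s u).comp γ.toContinuousMap, ?_, ?_, ?_⟩
  · exact (ContinuousMap.continuous_precomp _).comp hs
  · intro u
    have := he u
    simpa using this
  · intro g u h t
    exact hg g u h _

def Step {Y : Type*} [TopologicalSpace Y] (x y : Y) : Prop := ∃ z, x ⤳ z ∧ y ⤳ z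

lemma chain_of_path {Y : Type*} [TopologicalSpace Y] [AlexandrovDiscrete Y]
    (γ : unitInterval → Y) (hγ : Continuous γ) :
    Relation.ReflTransGen Step (γ 0) (γ 1) := by
  have hc : IsClopen {y | Relation.ReflTransGen Step (γ 0) y} := by
    constructor
    · rw [← isOpen_compl_iff, isOpen_iff_forall_specializes]
      intro x y hxy hy hx
      exact hy (Relation.ReflTransGen.tail hx ⟨y, hxy, specializes_rfl⟩)
    · rw [isOpen_iff_forall_specializes]
      intro x y hxy hy
      exact Relation.ReflTransGen.tail hy ⟨y, specializes_rfl, hxy⟩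
  have h2 := (hc.preimage hγ)
  rcases isClopen_iff.1 h2 with h | h
  · have : (0 : unitInterval) ∈ (∅ : Set unitInterval) := by
      rw [← h]; exact Relation.ReflTransGen.refl
    exact this.elim
  · have : (1 : unitInterval) ∈ (Set.univ : Set unitInterval) := trivial
    rw [← h] at this
    exact this

lemma fence_of_chain {Y : Type*} [TopologicalSpace Y] (x y : Y)
    (h : Relation.ReflTransGen Step x y) :
    ∃ (k : ℕ) (f : ℕ → Y), (∀ j, f (2 * j) ⤳ f (2 * j + 1) ∧ f (2 * j + 2) ⤳ f (2 * j + 1)) ∧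
      f 0 = x ∧ ∀ i, 2 * k ≤ i → f i = y := by
  induction h with
  | refl => exact ⟨0, fun _ => x, fun j => ⟨specializes_rfl, specializes_rfl⟩, rfl, fun _ _ => rfl⟩
  | @tail b c hb hs ih =>
    obtain ⟨k, f, hf, h0, h1⟩ := ih
    obtain ⟨z, hbz, hcz⟩ := hs
    refine ⟨k + 1, fun i => if i ≤ 2 * k then f i else if i = 2 * k + 1 then z else c, ?_, ?_, ?_⟩
    · intro j
      rcases lt_trichotomy j k with h | h | h
      · have e1 : 2 * j ≤ 2 * k := by omega
        have e2 : 2 * j + 1 ≤ 2 * k := by omega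
        have e3 : 2 * j + 2 ≤ 2 * k := by omega
        simp only [e1, e2, e3, if_true]
        exact hf j
      · subst h
        simpa [h1] using ⟨hbz, hcz⟩
      · have e1 : ¬ 2 * j ≤ 2 * k := by omega
        have e2 : ¬ 2 * j + 1 ≤ 2 * k := by omega
        have e3 : ¬ 2 * j + 2 ≤ 2 * k := by omega
        have e4 : ¬ 2 * j = 2 * k + 1 := by omega
        have e5 : ¬ 2 * j + 1 = 2 * k + 1 := by omega
        have e6 : ¬ 2 * j + 2 = 2 * k + 1 := by omega
        simp only [e1, e2, e3, e4, e5, e6, if_false]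
        exact ⟨specializes_rfl, specializes_rfl⟩
    · simpa using h0
    · intro i hi
      have e1 : ¬ i ≤ 2 * k := by omega
      have e2 : ¬ i = 2 * k + 1 := by omega
      simp only [e1, e2, if_false]

lemma navJ_of_nav {G X : Type*} [Group G] [TopologicalSpace X] [Finite X] [MulAction G X]
    (U : Set (X × X)) (h : EqNavigable G X U) : ∃ M, ∀ m, M ≤ m → EqNavigableJ G X m U := by
  obtain ⟨s, hs, he, hg⟩ := h
  let Y := {f : U → X // Continuous f ∧
    ∀ (g : G) (u : U) (h : g • (u : X × X) ∈ U), f ⟨g • (u : X × X), h⟩ = g • f u}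
  let γ : unitInterval → Y := fun t => ⟨fun u => s u t,
    (continuous_eval_const t).comp hs, fun g u h => hg g u h t⟩
  have hγ : Continuous γ := by
    refine Continuous.subtype_mk (continuous_pi fun u => (s u).continuous) _
  obtain ⟨k, f, hf, h0, h1⟩ := fence_of_chain _ _ (chain_of_path γ hγ)
  have hz : ∀ i j, zigzagLE i j → f i ⤳ f j := by
    rintro i j (rfl | ⟨hi, rfl | rfl⟩)
    · exact specializes_rfl
    · have := (hf (i / 2)).1
      rwa [show 2 * (i / 2) = i by omega] at this
    · have := (hf (j / 2)).2
      rwa [show 2 * (j / 2) + 2 = j + 1 by omega, show 2 * (j / 2) + 1 = j by omega] at this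
  refine ⟨2 * k, fun m hm => ?_⟩
  have hF : Continuous (fun p : U × J m => (f (J.val p.2)).1 p.1) := by
    apply cont_of_spec
    rintro ⟨u, i⟩ ⟨v, j⟩ huv
    have hu : u ⤳ v := huv.map continuous_fst
    have hi : i ⤳ j := huv.map continuous_snd
    have e1 : (f (J.val i)).1 u ⤳ (f (J.val i)).1 v := hu.map (f (J.val i)).2.1
    have e2 : (f (J.val i)).1 v ⤳ (f (J.val j)).1 v :=
      (hz _ _ ((J_spec i j).1 hi)).map ((continuous_apply v).comp continuous_subtype_val)
    exact e1.trans e2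
  refine ⟨(ContinuousMap.mk _ hF).curry, ContinuousMap.continuous _, ?_, ?_⟩
  · intro u
    constructor
    · change (f 0).1 u = _
      rw [h0]; exact (he u).1
    · change (f m).1 u = _
      rw [h1 m hm]; exact (he u).2
  · intro g u h t
    exact (f (J.val t)).2.2 g u h

end EqTCProof

/-- For any finite `T₀` `G`-space `P` (a finite group `G` acting by
homeomorphisms on a finite `T₀` space `P`), the equivariant topological complexity of `P`
equals its equivariant combinatorial complexity. -/
theorem eqTC_eq_eqCC (G P : Type*) [Group G] [Finite G]
    [TopologicalSpace P] [Finite P] [T0Space P]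
    [MulAction G P] [ContinuousConstSMul G P] :
    eqTC G P = eqCC G P := by
  apply le_antisymm
  · refine le_iInf fun m => le_sInf ?_
    rintro _ ⟨n, rfl, U, hO, hG, hU, hN⟩
    exact sInf_le ⟨n, rfl, U, hO, hG, hU, fun i => EqTCProof.nav_of_navJ _ _ (hN i)⟩
  · refine le_sInf ?_
    rintro _ ⟨n, rfl, U, hO, hG, hU, hN⟩
    choose M hM using fun i => EqTCProof.navJ_of_nav _ (hN i)
    refine (iInf_le _ (Finset.univ.sup M)).trans (sInf_le ⟨n, rfl, U, hO, hG, hU, fun i => ?_⟩)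
    exact hM i _ ((Finset.le_sup (f := M) (Finset.mem_univ i)).trans (Nat.le_succ _))
end

section
/- Let G be a finite group and X a finite T0 G-space which is G-connected. Then for every n ≥ 2, the equivariant topological complexity of the n-fold barycentric subdivision sd^n(X) is finite: TC_G(sd^n(X)) < ∞. -/
/-! ### Module B: finite G-posets (= finite T₀ G-spaces) and barycentric subdivision -/

/-- The down-set (Alexandrov) topology on a preorder: open sets are the downwards-closed
sets.  Under the identification of finite `T₀` spaces with finite posets via the
specialization order, this recovers the topology of the finite space. -/
def downTop (P : Type*) [Preorder P] : TopologicalSpace P where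
  IsOpen U := ∀ ⦃a⦄, a ∈ U → ∀ ⦃b⦄, b ≤ a → b ∈ U
  isOpen_univ := fun a _ b _ => Set.mem_univ b
  isOpen_inter := fun s t hs ht a ha b hba => ⟨hs ha.1 hba, ht ha.2 hba⟩
  isOpen_sUnion := fun S hS a ha b hba => by
    obtain ⟨t, htS, hat⟩ := ha
    exact ⟨t, htS, hS t htS hat hba⟩

/-- A finite `T₀` `G`-space, encoded as a finite poset (via the specialization order)
with an action of `G` by monotone maps (equivalently, by homeomorphisms). -/
structure FinGPoset (G : Type) [Group G] : Type 1 where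
  /-- the underlying set of points -/
  carrier : Type
  [fin : Fintype carrier]
  [po : PartialOrder carrier]
  /-- the action of `G` -/
  smul : G → carrier → carrier
  smul_one : ∀ x, smul 1 x = x
  smul_mul : ∀ g h x, smul (g * h) x = smul g (smul h x)
  smul_mono : ∀ g : G, ∀ x y : carrier, x ≤ y → smul g x ≤ smul g y

attribute [instance] FinGPoset.fin FinGPoset.po

namespace FinGPoset

variable {G : Type} [Group G]

/-- The nonempty chains of a poset. -/
def chains (P : Type) [PartialOrder P] : Type :=
  {c : Finset P // c.Nonempty ∧ ∀ x ∈ c, ∀ y ∈ c, x ≤ y ∨ y ≤ x}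

noncomputable instance (P : Type) [PartialOrder P] [Fintype P] : Fintype (chains P) := by
  classical exact Subtype.fintype _

instance (P : Type) [PartialOrder P] : PartialOrder (chains P) :=
  Subtype.partialOrder _

/-- The barycentric subdivision of a finite `T₀` `G`-space: the poset of nonempty chains,
ordered by inclusion, with the induced `G`-action `g • {p₀ < ⋯ < pₙ} = {g•p₀ < ⋯ < g•pₙ}`. -/
noncomputable def sd (X : FinGPoset G) : FinGPoset G := by
  classical
  exact
  { carrier := chains X.carrier
    smul := fun g c => ⟨c.val.image (X.smul g), c.prop.1.image _, by
      intro x hx y hy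
      rcases Finset.mem_image.mp hx with ⟨a, ha, rfl⟩
      rcases Finset.mem_image.mp hy with ⟨b, hb, rfl⟩
      rcases c.prop.2 a ha b hb with h | h
      · exact Or.inl (X.smul_mono g _ _ h)
      · exact Or.inr (X.smul_mono g _ _ h)⟩
    smul_one := fun c => by
      apply Subtype.ext
      show c.val.image (X.smul 1) = c.val
      rw [Finset.image_congr (g := id) (fun x _ => X.smul_one x), Finset.image_id]
    smul_mul := fun g h c => by
      apply Subtype.ext
      show c.val.image (X.smul (g * h)) = (c.val.image (X.smul h)).image (X.smul g)
      rw [Finset.image_image]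
      exact Finset.image_congr (fun x _ => X.smul_mul g h x)
    smul_mono := fun g c d hcd => by
      show c.val.image (X.smul g) ≤ d.val.image (X.smul g)
      exact Finset.image_subset_image hcd }

/-- Iterated barycentric subdivision. -/
noncomputable def sdIter : ℕ → FinGPoset G → FinGPoset G
  | 0, X => X
  | (n + 1), X => (sdIter n X).sd

/-- The `G`-action on a finite `T₀` `G`-space, as a `MulAction`. -/
def mulAction (X : FinGPoset G) : MulAction G X.carrier where
  smul := X.smul
  one_smul := X.smul_one
  mul_smul := X.smul_mul

/-- The set of points of `X` fixed by every element of the subgroup `H`. -/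
def fixedBy (X : FinGPoset G) (H : Subgroup G) : Set X.carrier :=
  {x | ∀ h ∈ H, X.smul h x = x}

/-- The set of points of `X` fixed by every element of `G`. -/
def fixedSet (X : FinGPoset G) : Set X.carrier :=
  {x | ∀ g : G, X.smul g x = x}

/-- `X` is `G`-connected: for every subgroup `H ≤ G`, the fixed-point set `X^H`
(with the topology of the finite space) is path-connected. -/
def GConnected (X : FinGPoset G) : Prop :=
  letI : TopologicalSpace X.carrier := downTop X.carrier
  ∀ H : Subgroup G, ∀ a ∈ X.fixedBy H, ∀ b ∈ X.fixedBy H, JoinedIn (X.fixedBy H) a b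

/-- A subset of a finite `T₀` `G`-space is open iff it is open in the down-set topology. -/
def IsOpenP (X : FinGPoset G) (U : Set X.carrier) : Prop :=
  letI : TopologicalSpace X.carrier := downTop X.carrier
  IsOpen U

/-- The equivariant topological complexity of a finite `T₀` `G`-space. -/
noncomputable def TCG (X : FinGPoset G) : ℕ∞ :=
  letI : TopologicalSpace X.carrier := downTop X.carrier
  letI : MulAction G X.carrier := X.mulAction
  eqTC G X.carrier

/-- The equivariant Lusternik–Schnirelmann category of a finite `T₀` `G`-space. -/
noncomputable def LSG (X : FinGPoset G) : ℕ∞ :=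
  letI : TopologicalSpace X.carrier := downTop X.carrier
  letI : MulAction G X.carrier := X.mulAction
  eqLS G X.carrier

/-- The saturation `G · U` of a subset `U` of a `G`-space. -/
def satur (X : FinGPoset G) (U : Set X.carrier) : Set X.carrier :=
  {v | ∃ g : G, ∃ u ∈ U, v = X.smul g u}

/-- A subset of a finite `T₀` `G`-space is `G`-categorical: it is invariant and its
inclusion is `G`-homotopic to a map taking values in a single orbit. -/
def GCat (X : FinGPoset G) (U : Set X.carrier) : Prop :=
  letI : TopologicalSpace X.carrier := downTop X.carrier
  letI : MulAction G X.carrier := X.mulAction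
  GInvariant G U ∧ GCategorical G X.carrier U

end FinGPoset

theorem continuous_of_monotone_aux {Y : Type*} [TopologicalSpace Y] [PartialOrder Y]
    (hop : ∀ U : Set Y, IsOpen U ↔ ∀ a ∈ U, ∀ b ≤ a, b ∈ U)
    (U : Set (Y × Y)) (f : U → Y) (hf : ∀ u v : U, (u : Y × Y) ≤ v → f u ≤ f v) :
    Continuous f := by
  refine continuous_def.2 fun V hV => isOpen_iff_mem_nhds.2 fun u hu => ?_
  have h1 : IsOpen (Set.Iic (u : Y × Y).1) := (hop _).2 fun a ha b hb => le_trans hb ha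
  have h2 : IsOpen (Set.Iic (u : Y × Y).2) := (hop _).2 fun a ha b hb => le_trans hb ha
  have h3 : IsOpen ((Subtype.val : U → Y × Y) ⁻¹'
      (Set.Iic (u : Y × Y).1 ×ˢ Set.Iic (u : Y × Y).2)) :=
    (h1.prod h2).preimage continuous_subtype_val
  refine Filter.mem_of_superset (h3.mem_nhds ⟨le_refl _, le_refl _⟩) fun v hv => ?_
  exact (hop V).1 hV _ hu _ (hf v u ⟨hv.1, hv.2⟩)

/-- equivariance of maps out of a subset of the square -/
def EqvMap (G : Type*) [Group G] {Y : Type*} [TopologicalSpace Y] [MulAction G Y]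
    (U : Set (Y × Y)) (f : C(U, Y)) : Prop :=
  ∀ (g : G) (u : U) (h : g • (u : Y × Y) ∈ U), f ⟨g • (u : Y × Y), h⟩ = g • f u

theorem homotopic_of_le_aux (G : Type*) [Group G] {Y : Type*} [TopologicalSpace Y]
    [PartialOrder Y] [MulAction G Y]
    (hop : ∀ U : Set Y, IsOpen U ↔ ∀ a ∈ U, ∀ b ≤ a, b ∈ U)
    (U : Set (Y × Y)) (f f' : C(U, Y)) (hf : EqvMap G U f) (hf' : EqvMap G U f')
    (hle : ∀ u, f u ≤ f' u) : ContinuousMap.HomotopicWith f f' (EqvMap G U) := by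
  classical
  refine ⟨⟨⟨⟨fun p => if p.1 = 1 then f' p.2 else f p.2, ?_⟩, ?_, ?_⟩, ?_⟩⟩
  · refine continuous_def.2 fun V hV => ?_
    have : (fun p : unitInterval × U => if p.1 = 1 then f' p.2 else f p.2) ⁻¹' V
        = (({1}ᶜ : Set unitInterval) ×ˢ (f ⁻¹' V)) ∪ (Set.univ ×ˢ (f' ⁻¹' V)) := by
      ext ⟨t, u⟩
      have := (hop V).1 hV (f' u)
      have h2 := fun h => this h (f u) (hle u)
      by_cases ht : t = 1
      · simp [ht]
      · simp [ht]
        exact h2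
    rw [this]
    exact ((isOpen_compl_singleton).prod (hV.preimage f.continuous)).union
      (isOpen_univ.prod (hV.preimage f'.continuous))
  · intro u; simp
  · intro u; simp
  · intro t g u h
    by_cases ht : t = 1
    · subst ht; simpa using hf' g u h
    · simpa [ht] using hf g u h

/-- one step of a fence -/
def FStep {Y : Type*} [PartialOrder Y] (F : Set Y) (p q : Y) : Prop :=
  p ∈ F ∧ q ∈ F ∧ (p ≤ q ∨ q ≤ p)

theorem nav_aux (G : Type*) [Group G] {Y : Type*} [TopologicalSpace Y]
    [PartialOrder Y] [MulAction G Y]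
    (hop : ∀ U : Set Y, IsOpen U ↔ ∀ a ∈ U, ∀ b ≤ a, b ∈ U)
    (hm : ∀ (g : G) (a b : Y), a ≤ b → g • a ≤ g • b)
    (x y p0 q0 : Y)
    (hp : ∀ (a : Y) (g g' : G), a ≤ g • x → a ≤ g' • x → g • p0 = g' • p0)
    (hq : ∀ (a : Y) (g g' : G), a ≤ g • y → a ≤ g' • y → g • q0 = g' • q0)
    (hpj : ∀ (a : Y) (g : G), a ≤ g • x → ∃ s, IsLUB {a, g • p0} s)
    (hqj : ∀ (a : Y) (g : G), a ≤ g • y → ∃ s, IsLUB {a, g • q0} s)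
    (hfence : Relation.ReflTransGen
      (FStep {p : Y | ∀ k : G, k • p0 = p0 → k • q0 = q0 → k • p = p}) p0 q0) :
    EqNavigable G Y {u : Y × Y | ∃ g : G, u.1 ≤ g • x ∧ u.2 ≤ g • y} := by
  classical
  set U : Set (Y × Y) := {u : Y × Y | ∃ g : G, u.1 ≤ g • x ∧ u.2 ≤ g • y} with hU
  set F : Set Y := {p : Y | ∀ k : G, k • p0 = p0 → k • q0 = q0 → k • p = p} with hF
  have hch : ∀ u : U, ∃ g : G, (u : Y × Y).1 ≤ g • x ∧ (u : Y × Y).2 ≤ g • y := fun u => u.2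
  choose γ hγ1 hγ2 using hch
  have key : ∀ p ∈ F, ∀ (u : U) (g : G), (u : Y × Y).1 ≤ g • x → (u : Y × Y).2 ≤ g • y →
      γ u • p = g • p := by
    intro p hpF u g h1 h2
    have e1 := hp _ _ _ (hγ1 u) h1
    have e2 := hq _ _ _ (hγ2 u) h2
    have := hpF (g⁻¹ * γ u) (by rw [mul_smul, e1, inv_smul_smul])
      (by rw [mul_smul, e2, inv_smul_smul])
    rw [mul_smul, inv_smul_eq_iff] at this
    exact this
  have kle : ∀ p ∈ F, ∀ u v : U, (u : Y × Y) ≤ v → γ u • p = γ v • p := fun p hpF u v h =>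
    key p hpF u _ (h.1.trans (hγ1 v)) (h.2.trans (hγ2 v))
  have keq : ∀ p ∈ F, ∀ (g : G) (u : U) (h : g • (u : Y × Y) ∈ U),
      γ ⟨g • (u : Y × Y), h⟩ • p = g • γ u • p := by
    intro p hpF g u h
    rw [← mul_smul]
    refine key p hpF _ _ ?_ ?_
    · rw [mul_smul]; exact hm g _ _ (hγ1 u)
    · rw [mul_smul]; exact hm g _ _ (hγ2 u)
  let φ : F → C(U, Y) := fun p => ⟨fun u => γ u • p.1,
    continuous_of_monotone_aux hop U _ fun u v h => (kle p.1 p.2 u v h).le⟩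
  have hφ : ∀ p : F, EqvMap G U (φ p) := fun p g u h => keq p.1 p.2 g u h
  have hp0 : p0 ∈ F := fun k h _ => h
  have hq0 : q0 ∈ F := fun k _ h => h
  have step : ∀ p q : F, p.1 ≤ q.1 → ContinuousMap.HomotopicWith (φ p) (φ q) (EqvMap G U) :=
    fun p q h => homotopic_of_le_aux G hop U _ _ (hφ p) (hφ q) fun u => hm _ _ _ h
  have hmid : ∀ q, Relation.ReflTransGen (FStep F) p0 q → ∀ hq : q ∈ F,
      ContinuousMap.HomotopicWith (φ ⟨p0, hp0⟩) (φ ⟨q, hq⟩) (EqvMap G U) := by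
    intro q h
    induction h with
    | refl => intro hq; exact ContinuousMap.HomotopicWith.refl _ (hφ _)
    | tail _ hs ih =>
      intro hq
      refine (ih hs.1).trans ?_
      rcases hs.2.2 with h | h
      · exact step ⟨_, hs.1⟩ ⟨_, hq⟩ h
      · exact (step ⟨_, hq⟩ ⟨_, hs.1⟩ h).symm
  have side : ∀ (f : C(U, Y)), EqvMap G U f → (∀ u v : U, (u : Y × Y) ≤ v → f u ≤ f v) →
      ∀ r : F, (∀ u : U, ∃ s, IsLUB {f u, γ u • r.1} s) →
      ContinuousMap.HomotopicWith f (φ r) (EqvMap G U) := by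
    intro f hf hfm r hs
    choose M hM using hs
    have hM1 : ∀ u, f u ≤ M u := fun u => (hM u).1 (by simp)
    have hM2 : ∀ u, γ u • r.1 ≤ M u := fun u => (hM u).1 (by simp)
    have hM3 : ∀ u s, f u ≤ s → γ u • r.1 ≤ s → M u ≤ s := fun u s h1 h2 =>
      (hM u).2 (by rintro _ (rfl | rfl) <;> assumption)
    let m : C(U, Y) := ⟨M, continuous_of_monotone_aux hop U _ fun u v h =>
      hM3 _ _ ((hfm u v h).trans (hM1 v)) ((kle r.1 r.2 u v h).le.trans (hM2 v))⟩
    have hmE : EqvMap G U m := by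
      intro g u h
      have e1 := hf g u h
      have e2 := keq r.1 r.2 g u h
      apply le_antisymm
      · refine hM3 _ _ ?_ ?_
        · rw [e1]; exact hm g _ _ (hM1 u)
        · rw [e2]; exact hm g _ _ (hM2 u)
      · have : M u ≤ g⁻¹ • M ⟨g • (u : Y × Y), h⟩ := by
          refine hM3 _ _ ?_ ?_
          · have := hm g⁻¹ _ _ (hM1 ⟨g • (u : Y × Y), h⟩)
            rwa [e1, inv_smul_smul] at this
          · have := hm g⁻¹ _ _ (hM2 ⟨g • (u : Y × Y), h⟩)
            rwa [e2, inv_smul_smul] at this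
        have := hm g _ _ this
        rwa [smul_inv_smul] at this
    exact (homotopic_of_le_aux G hop U f m hf hmE hM1).trans
      (homotopic_of_le_aux G hop U (φ r) m (hφ r) hmE hM2).symm
  let f1 : C(U, Y) := ⟨fun u => (u : Y × Y).1, by fun_prop⟩
  let f2 : C(U, Y) := ⟨fun u => (u : Y × Y).2, by fun_prop⟩
  have s1 := side f1 (fun g u h => rfl) (fun u v h => h.1) ⟨p0, hp0⟩
    (fun u => hpj _ _ (hγ1 u))
  have s2 := side f2 (fun g u h => rfl) (fun u v h => h.2) ⟨q0, hq0⟩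
    (fun u => hqj _ _ (hγ2 u))
  obtain ⟨H⟩ := (s1.trans (hmid q0 hfence hq0)).trans s2.symm
  let H' : C(U × unitInterval, Y) :=
    ⟨fun p => H (p.2, p.1), by exact H.continuous.comp continuous_swap⟩
  refine ⟨fun u => H'.curry u, H'.curry.continuous, fun u => ⟨?_, ?_⟩, fun g u h t => ?_⟩
  · exact H.apply_zero u
  · exact H.apply_one u
  · exact H.prop t g u h

namespace FinGPoset

variable {G : Type} [Group G]

theorem smul_eq_of_comparable [Finite G] (X : FinGPoset G) (g : G) (x : X.carrier)
    (h : x ≤ X.smul g x ∨ X.smul g x ≤ x) : X.smul g x = x := by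
  have main : ∀ g : G, x ≤ X.smul g x → X.smul g x = x := by
    intro g h
    have hk : ∀ k : ℕ, X.smul g x ≤ X.smul (g ^ (k + 1)) x := by
      intro k
      induction k with
      | zero => simp
      | succ k ih =>
        rw [pow_succ' g (k + 1), X.smul_mul]
        exact X.smul_mono g _ _ (h.trans ih)
    have h1 := hk (orderOf g - 1)
    rw [Nat.sub_add_cancel (orderOf_pos g), pow_orderOf_eq_one, X.smul_one] at h1
    exact le_antisymm h1 h
  rcases h with h | h
  · exact main g h
  · have h1 := X.smul_mono g⁻¹ _ _ h
    rw [← X.smul_mul, inv_mul_cancel, X.smul_one] at h1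
    have h2 := main _ h1
    have h3 := congrArg (X.smul g) h2
    rw [← X.smul_mul, mul_inv_cancel, X.smul_one] at h3
    exact h3.symm

theorem mem_sd_smul (X : FinGPoset G) (g : G) (c : chains X.carrier) (e : X.carrier) :
    e ∈ (show chains X.carrier from X.sd.smul g c).val ↔ ∃ a ∈ c.val, X.smul g a = e := by
  classical
  exact Finset.mem_image

theorem sd_fix [Finite G] (X : FinGPoset G) (g : G) (c : chains X.carrier)
    (h : X.sd.smul g c = c) (e : X.carrier) (he : e ∈ c.val) : X.smul g e = e := by
  have h1 : X.smul g e ∈ c.val := by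
    have := (X.mem_sd_smul g c (X.smul g e)).2 ⟨e, he, rfl⟩
    rw [h] at this
    exact this
  exact X.smul_eq_of_comparable g e (c.2.2 _ he _ h1)

theorem sd_fix_of (X : FinGPoset G) (g : G) (c : chains X.carrier)
    (h : ∀ e ∈ c.val, X.smul g e = e) : X.sd.smul g c = c := by
  apply Subtype.ext
  ext e
  rw [X.mem_sd_smul g c e]
  constructor
  · rintro ⟨a, ha, rfl⟩
    rw [h a ha]; exact ha
  · intro he
    exact ⟨e, he, h e he⟩

/-- fence connectedness of all fixed point sets -/
def FConn (X : FinGPoset G) : Prop :=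
  ∀ H : Subgroup G, ∀ a ∈ X.fixedBy H, ∀ b ∈ X.fixedBy H,
    Relation.ReflTransGen (FStep (X.fixedBy H)) a b

theorem fstep_symm {Y : Type*} [PartialOrder Y] (F : Set Y) : Std.Symm (FStep F) :=
  ⟨fun _ _ h => ⟨h.2.1, h.1, h.2.2.symm⟩⟩

theorem fconn_of_gconnected (X : FinGPoset G) (h : X.GConnected) : X.FConn := by
  letI : TopologicalSpace X.carrier := downTop X.carrier
  intro H a ha b hb
  obtain ⟨γ, hγ⟩ : JoinedIn (X.fixedBy H) a b := h H a ha b hb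
  let S : Set unitInterval := {t | Relation.ReflTransGen (FStep (X.fixedBy H)) a (γ t)}
  have nb : ∀ t, γ ⁻¹' (Set.Iic (γ t)) ∈ nhds t := by
    intro t
    have : IsOpen (Set.Iic (γ t)) := fun a ha b hb => le_trans hb ha
    exact (this.preimage γ.continuous).mem_nhds (le_refl _)
  have hS : IsClopen S := by
    constructor
    · rw [← isOpen_compl_iff, isOpen_iff_mem_nhds]
      intro t ht
      refine Filter.mem_of_superset (nb t) fun t' ht' hc => ht ?_
      exact Relation.ReflTransGen.tail hc ⟨hγ _, hγ _, Or.inl ht'⟩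
    · rw [isOpen_iff_mem_nhds]
      intro t ht
      refine Filter.mem_of_superset (nb t) fun t' ht' => ?_
      exact Relation.ReflTransGen.tail ht ⟨hγ _, hγ _, Or.inr ht'⟩
  have h0 : (0 : unitInterval) ∈ S := by
    show Relation.ReflTransGen _ a (γ 0)
    rw [γ.source]
  have h1 : (1 : unitInterval) ∈ S := by
    rw [hS.eq_univ ⟨_, h0⟩]; trivial
  have h1' : Relation.ReflTransGen (FStep (X.fixedBy H)) a (γ 1) := h1
  rwa [γ.target] at h1'

/-- singleton chain -/
def sing (X : FinGPoset G) (e : X.carrier) : chains X.carrier :=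
  ⟨{e}, by simp, by simp⟩

theorem fconn_sd [Finite G] (X : FinGPoset G) (h : X.FConn) : X.sd.FConn := by
  classical
  intro H
  have hs : ∀ e ∈ X.fixedBy H, (X.sing e : X.sd.carrier) ∈ X.sd.fixedBy H := by
    intro e he k hk
    refine X.sd_fix_of k (X.sing e) fun e' he' => ?_
    rw [Finset.mem_singleton.1 he']
    exact he k hk
  have hmem : ∀ c : chains X.carrier, (c : X.sd.carrier) ∈ X.sd.fixedBy H →
      ∀ e ∈ c.val, e ∈ X.fixedBy H := fun c hc e he k hk => X.sd_fix k c (hc k hk) e he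
  have hle : ∀ (c : chains X.carrier) (e : X.carrier), e ∈ c.val →
      @LE.le X.sd.carrier _ (X.sing e) c := by
    intro c e he
    show ({e} : Finset X.carrier) ⊆ c.val
    simpa using he
  have hmid : ∀ a b, a ∈ X.fixedBy H → Relation.ReflTransGen (FStep (X.fixedBy H)) a b →
      Relation.ReflTransGen (FStep (X.sd.fixedBy H)) (X.sing a) (X.sing b) := by
    intro a b ha hab
    induction hab with
    | refl => exact .refl
    | @tail p q _ hst ih =>
      let d : chains X.carrier := ⟨{p, q}, by simp, by
        have := hst.2.2
        have h' := this.symm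
        intro x hx y hy
        simp only [Finset.mem_insert, Finset.mem_singleton] at hx hy
        rcases hx with rfl | rfl <;> rcases hy with rfl | rfl <;> simp [*]⟩
      have hd : (d : X.sd.carrier) ∈ X.sd.fixedBy H := by
        intro k hk
        refine X.sd_fix_of k d fun e he => ?_
        rcases Finset.mem_insert.1 he with rfl | he
        · exact hst.1 k hk
        · rw [Finset.mem_singleton.1 he]; exact hst.2.1 k hk
      refine (ih.tail ⟨hs _ hst.1, hd, Or.inl (hle d p ?_)⟩).tail
        ⟨hd, hs _ hst.2.1, Or.inr (hle d q ?_)⟩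
      · exact Finset.mem_insert_self _ _
      · exact Finset.mem_insert_of_mem (Finset.mem_singleton_self _)
  intro c hc d hd
  obtain ⟨e, he⟩ := (show chains X.carrier from c).2.1
  obtain ⟨f, hf⟩ := (show chains X.carrier from d).2.1
  have he' := hmem c hc e he
  have hf' := hmem d hd f hf
  refine Relation.ReflTransGen.trans (.single ⟨hc, hs e he', Or.inr (hle c e he)⟩) ?_
  refine Relation.ReflTransGen.trans (hmid e f he' (h H e he' f hf')) ?_
  exact .single ⟨hs f hf', hd, Or.inl (hle d f hf)⟩

theorem fconn_sdIter [Finite G] (X : FinGPoset G) (h : X.FConn) : ∀ n, (sdIter n X).FConn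
  | 0 => h
  | n + 1 => fconn_sd _ (fconn_sdIter X h n)

theorem exists_min_chain {P : Type} [PartialOrder P] (c : chains P) :
    ∃ z ∈ c.val, ∀ w ∈ c.val, z ≤ w := by
  obtain ⟨z, hz, hmin⟩ := c.val.exists_minimal c.2.1
  refine ⟨z, hz, fun w hw => ?_⟩
  rcases c.2.2 z hz w hw with h | h
  · exact h
  · exact hmin hw h

theorem sd_sd_key [Finite G] (W : FinGPoset G) (x : chains W.sd.carrier)
    (z : W.sd.carrier) (hz : z ∈ x.val) (hmin : ∀ w ∈ x.val, z ≤ w)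
    (a : chains W.sd.carrier) (g g' : G)
    (h : @LE.le W.sd.sd.carrier _ a (W.sd.sd.smul g x))
    (h' : @LE.le W.sd.sd.carrier _ a (W.sd.sd.smul g' x)) :
    W.sd.smul g z = W.sd.smul g' z := by
  obtain ⟨e, he⟩ := a.2.1
  obtain ⟨u, hu, hue⟩ := (W.sd.mem_sd_smul g x e).1 (h he)
  obtain ⟨v, hv, hve⟩ := (W.sd.mem_sd_smul g' x e).1 (h' he)
  have hvu : W.sd.smul (g'⁻¹ * g) u = v := by
    rw [W.sd.smul_mul, hue, ← hve, ← W.sd.smul_mul, inv_mul_cancel, W.sd.smul_one]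
  have hfu : W.sd.smul (g'⁻¹ * g) u = u := by
    apply W.sd.smul_eq_of_comparable
    rw [hvu]
    exact x.2.2 u hu v hv
  have hsub : (show chains W.carrier from z).val ⊆ (show chains W.carrier from u).val :=
    hmin u hu
  have hfz : W.sd.smul (g'⁻¹ * g) z = z :=
    W.sd_fix_of _ z fun e he => W.sd_fix _ u hfu e (hsub he)
  have := congrArg (W.sd.smul g') hfz
  rwa [← W.sd.smul_mul, mul_inv_cancel_left] at this

theorem sing_smul (X : FinGPoset G) (g : G) (e : X.carrier) :
    X.sd.smul g (X.sing e) = X.sing (X.smul g e) := by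
  classical
  apply Subtype.ext
  exact Finset.image_singleton _ _

theorem sd_lub (X : FinGPoset G) (a b : chains X.carrier) (e : X.carrier)
    (h : a.val ⊆ b.val) (he : e ∈ b.val) :
    ∃ s : X.sd.carrier, IsLUB ({(a : X.sd.carrier), X.sing e} : Set X.sd.carrier) s := by
  classical
  have hsub : insert e a.val ⊆ b.val := Finset.insert_subset he h
  let s : chains X.carrier := ⟨insert e a.val, by simp,
    fun x hx y hy => b.2.2 x (hsub hx) y (hsub hy)⟩
  refine ⟨s, ?_, ?_⟩
  · rintro _ (rfl | rfl)
    · exact Finset.subset_insert e _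
    · exact Finset.singleton_subset_iff.2 (Finset.mem_insert_self _ _)
  · intro t ht
    have h1 : a.val ⊆ (show chains X.carrier from t).val := ht (Set.mem_insert _ _)
    have h2 : ({e} : Finset X.carrier) ⊆ (show chains X.carrier from t).val :=
      ht (Set.mem_insert_of_mem _ rfl)
    exact Finset.insert_subset (Finset.singleton_subset_iff.1 h2) h1

theorem TCG_sd_sd_lt_top [Finite G] (W : FinGPoset G) (hc : W.sd.sd.FConn) :
    W.sd.sd.TCG < ⊤ := by
  classical
  letI : TopologicalSpace W.sd.sd.carrier := downTop W.sd.sd.carrier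
  letI : MulAction G W.sd.sd.carrier := W.sd.sd.mulAction
  show eqTC G W.sd.sd.carrier < ⊤
  have hop : ∀ U : Set W.sd.sd.carrier, IsOpen U ↔ ∀ a ∈ U, ∀ b ≤ a, b ∈ U :=
    fun U => Iff.rfl
  let Y := W.sd.sd.carrier
  let V : Y × Y → Set (Y × Y) := fun xy => {u | ∃ g : G, u.1 ≤ g • xy.1 ∧ u.2 ≤ g • xy.2}
  have hIic : ∀ a : Y, IsOpen (Set.Iic a) := fun a b hb c hcb => le_trans hcb hb
  let ε := Fintype.equivFin (Y × Y)
  refine lt_of_le_of_lt (sInf_le ⟨Fintype.card (Y × Y), rfl, fun i => V (ε.symm i),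
    fun i => ?_, fun i => ?_, ?_, fun i => ?_⟩) (ENat.natCast_lt_top _)
  · have : V (ε.symm i) = ⋃ g : G, (Set.Iic (g • (ε.symm i).1) ×ˢ Set.Iic (g • (ε.symm i).2)) := by
      ext u
      rw [Set.mem_iUnion]
      exact Iff.rfl
    show IsOpen (V (ε.symm i))
    rw [this]
    exact isOpen_iUnion fun g => (hIic _).prod (hIic _)
  · rintro k u ⟨g, h1, h2⟩
    refine ⟨k * g, ?_, ?_⟩
    · rw [mul_smul]; exact W.sd.sd.smul_mono k _ _ h1
    · rw [mul_smul]; exact W.sd.sd.smul_mono k _ _ h2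
  · refine Set.eq_univ_of_forall fun u => Set.mem_iUnion.2 ⟨ε u, 1, ?_⟩
    simp
  · show EqNavigable G Y (V (ε.symm i))
    obtain ⟨x, y⟩ := ε.symm i
    obtain ⟨z, hz, hzm⟩ := exists_min_chain (show chains W.sd.carrier from x)
    obtain ⟨w, hw, hwm⟩ := exists_min_chain (show chains W.sd.carrier from y)
    have eqv : ∀ (g : G) (e : W.sd.carrier),
      g • (show Y from W.sd.sing e) = (show Y from W.sd.sing (W.sd.smul g e)) := fun g e =>
        W.sd.sing_smul g e
    have lub : ∀ (x : chains W.sd.carrier) (z : W.sd.carrier), z ∈ x.val →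
        ∀ (a : Y) (g : G), a ≤ g • (show Y from x) →
        ∃ s, IsLUB {a, g • (show Y from W.sd.sing z)} s := by
      intro x z hz a g h
      rw [eqv]
      exact W.sd.sd_lub a (W.sd.sd.smul g x) (W.sd.smul g z) h
        ((W.sd.mem_sd_smul g x _).2 ⟨z, hz, rfl⟩)
    refine nav_aux G hop (fun g a b h => W.sd.sd.smul_mono g a b h) x y
      (W.sd.sing z) (W.sd.sing w) ?_ ?_ (lub x z hz) (lub y w hw) ?_
    · intro a g g' h h'
      refine (eqv g z).trans (Eq.trans ?_ (eqv g' z).symm)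
      rw [W.sd_sd_key x z hz hzm a g g' h h']
    · intro a g g' h h'
      refine (eqv g w).trans (Eq.trans ?_ (eqv g' w).symm)
      rw [W.sd_sd_key y w hw hwm a g g' h h']
    · let K : Subgroup G := MulAction.stabilizer G (show Y from W.sd.sing z) ⊓
        MulAction.stabilizer G (show Y from W.sd.sing w)
      have := hc K (W.sd.sing z) (fun k hk => hk.1) (W.sd.sing w) (fun k hk => hk.2)
      refine Relation.ReflTransGen.mono ?_ _ _ this
      rintro p q ⟨h1, h2, h3⟩
      exact ⟨fun k a b => h1 k ⟨a, b⟩, fun k a b => h2 k ⟨a, b⟩, h3⟩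

end FinGPoset

/-- Let `G` be a finite group and `X` a finite `T₀` `G`-space (encoded as a
finite `G`-poset via the specialization order) which is `G`-connected. Then for every
`n ≥ 2`, the equivariant topological complexity of the `n`-fold barycentric subdivision
`sd^n(X)` is finite. -/
theorem TCG_sdIter_lt_top (G : Type) [Group G] [Finite G] (X : FinGPoset G)
    (hconn : X.GConnected) (n : ℕ) (hn : 2 ≤ n) :
    (FinGPoset.sdIter n X).TCG < ⊤ := by
  obtain ⟨m, rfl⟩ := Nat.exists_eq_add_of_le' hn
  exact FinGPoset.TCG_sd_sd_lt_top (FinGPoset.sdIter m X)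
    (FinGPoset.fconn_sdIter X (X.fconn_of_gconnected hconn) (m + 2))
end

section
/- Let G be a finite group and K an ordered G-simplicial complex. Let C_G(|K|) denote the least number of closed invariant sets covering |K|×|K| on each of which the two projections p_1, p_2: |K|×|K| → |K| restrict to G-homotopic maps. Then TC_G(|K|) = C_G(|K|); that is, equivariant topological complexity of |K| can be computed using closed invariant covers. -/
/-! ### Module C: ordered G-simplicial complexes and their geometric realizations -/

/-- An ordered `G`-simplicial complex: a finite abstract simplicial complex whose vertex set
carries a partial order in which every simplex is totally ordered, together with an action of
`G` on the vertices by monotone simplicial maps. -/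
structure GOSC (G : Type) [Group G] : Type 1 where
  /-- the vertex set -/
  V : Type
  [fin : Fintype V]
  [dec : DecidableEq V]
  [po : PartialOrder V]
  /-- the set of simplices -/
  faces : Set (Finset V)
  singleton_mem : ∀ v : V, {v} ∈ faces
  nonempty_of_mem : ∀ s ∈ faces, s.Nonempty
  down_closed : ∀ s ∈ faces, ∀ t ⊆ s, t.Nonempty → t ∈ faces
  face_chain : ∀ s ∈ faces, ∀ x ∈ s, ∀ y ∈ s, x ≤ y ∨ y ≤ x
  /-- the action of `G` on vertices -/
  smul : G → V → V
  smul_one : ∀ v, smul 1 v = v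
  smul_mul : ∀ g h v, smul (g * h) v = smul g (smul h v)
  smul_mono : ∀ g : G, ∀ x y : V, x ≤ y → smul g x ≤ smul g y
  smul_faces : ∀ g : G, ∀ s ∈ faces, s.image (smul g) ∈ faces

attribute [instance] GOSC.fin GOSC.dec GOSC.po

namespace GOSC

variable {G : Type} [Group G]

/-- The underlying set of the geometric realization `|K|`: formal convex combinations of
vertices whose support is a simplex of `K`. -/
def realSet (K : GOSC G) : Set (K.V → ℝ) :=
  {f | (∀ v, 0 ≤ f v) ∧ (∑ v, f v) = 1 ∧ ∃ s ∈ K.faces, ∀ v, f v ≠ 0 → v ∈ s}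

/-- The geometric realization `|K|` of an ordered `G`-simplicial complex, topologized as a
subspace of Euclidean space `K.V → ℝ`. -/
def Real (K : GOSC G) : Type := {f : K.V → ℝ // f ∈ K.realSet}

instance (K : GOSC G) : TopologicalSpace K.Real :=
  inferInstanceAs (TopologicalSpace {f : K.V → ℝ // f ∈ K.realSet})

/-- Each `g : G` acts on `K.V` by an order isomorphism. -/
def permOf (K : GOSC G) (g : G) : Equiv K.V K.V where
  toFun := K.smul g
  invFun := K.smul g⁻¹
  left_inv := fun v => by
    rw [← K.smul_mul, inv_mul_cancel, K.smul_one]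
  right_inv := fun v => by
    rw [← K.smul_mul, mul_inv_cancel, K.smul_one]

/-- The action of `G` on the geometric realization, by affine extension:
`(g • f) v = f (g⁻¹ • v)`. -/
instance (K : GOSC G) : SMul G K.Real where
  smul g f := ⟨fun v => f.val (K.smul g⁻¹ v), by
    obtain ⟨hnn, hsum, s, hs, hsupp⟩ := f.prop
    refine ⟨fun v => hnn _, ?_, s.image (K.smul g), K.smul_faces g s hs, ?_⟩
    · rw [show (∑ v, f.val (K.smul g⁻¹ v)) = ∑ v, f.val (K.permOf g⁻¹ v) from rfl,
        Equiv.sum_comp (K.permOf g⁻¹) f.val]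
      exact hsum
    · intro v hv
      have : K.smul g⁻¹ v ∈ s := hsupp _ hv
      refine Finset.mem_image.mpr ⟨K.smul g⁻¹ v, this, ?_⟩
      rw [← K.smul_mul, mul_inv_cancel, K.smul_one]⟩

lemma smul_apply (K : GOSC G) (g : G) (f : K.Real) (v : K.V) :
    (g • f).val v = f.val (K.smul g⁻¹ v) := rfl

instance (K : GOSC G) : MulAction G K.Real where
  one_smul f := by
    apply Subtype.ext
    funext v
    rw [smul_apply, inv_one, K.smul_one]
  mul_smul g h f := by
    apply Subtype.ext
    funext v
    rw [smul_apply, smul_apply, smul_apply, mul_inv_rev, K.smul_mul]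

end GOSC

/-- The two projections `p₁, p₂ : |K| × |K| → |K|` restricted to `C` are `G`-homotopic:
there is a continuous equivariant homotopy `C × I → |K|` from the first projection to the
second. -/
def ProjGHomotopic {G : Type} [Group G] (K : GOSC G) (C : Set (K.Real × K.Real)) : Prop :=
  ∃ F : C × unitInterval → K.Real, Continuous F ∧
    (∀ u : C, F (u, 0) = (u : K.Real × K.Real).1) ∧
    (∀ u : C, F (u, 1) = (u : K.Real × K.Real).2) ∧
    (∀ (g : G) (u : C) (h : g • (u : K.Real × K.Real) ∈ C) (t : unitInterval),
      F (⟨g • (u : K.Real × K.Real), h⟩, t) = g • F (u, t))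

/-- `C_G(|K|)`: the least number of closed invariant sets covering `|K| × |K|` on each of
which the two projections are `G`-homotopic; `⊤` if there is no such cover. -/
noncomputable def closedTC {G : Type} [Group G] (K : GOSC G) : ℕ∞ :=
  sInf {k : ℕ∞ | ∃ n : ℕ, k = n ∧ ∃ U : Fin n → Set (K.Real × K.Real),
    (∀ i, IsClosed (U i)) ∧ (∀ i, GInvariant G (U i)) ∧ (⋃ i, U i) = Set.univ ∧
    ∀ i, ProjGHomotopic K (U i)}

namespace GOSC

section Helpers

variable {G : Type} [Group G]

instance metrizable_real (K : GOSC G) : TopologicalSpace.MetrizableSpace K.Real :=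
  inferInstanceAs (TopologicalSpace.MetrizableSpace {f : K.V → ℝ // f ∈ K.realSet})

lemma continuous_val (K : GOSC G) : Continuous (fun f : K.Real => (f.val : K.V → ℝ)) :=
  continuous_subtype_val

instance contSMul (K : GOSC G) : ContinuousConstSMul G K.Real where
  continuous_const_smul g := by
    refine Continuous.subtype_mk (f := fun f : K.Real => fun v => f.val (K.smul g⁻¹ v)) ?_ _
    exact continuous_pi fun v => (continuous_apply _).comp K.continuous_val

open Classical in
/-- minimum of the positive part over a nonempty non-face -/
noncomputable def mn (K : GOSC G) (s : Finset K.V) (f : K.V → ℝ) : ℝ :=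
  if h : s ∉ K.faces ∧ s.Nonempty then s.inf' h.2 (fun v => max (f v) 0) else 0

lemma mn_nonneg (K : GOSC G) (s : Finset K.V) (f : K.V → ℝ) : 0 ≤ K.mn s f := by
  unfold mn
  split_ifs with h
  · exact Finset.le_inf' _ _ fun v _ => le_max_right _ _
  · exact le_rfl

lemma mn_cont (K : GOSC G) (s : Finset K.V) : Continuous (K.mn s) := by
  unfold mn
  by_cases h : s ∉ K.faces ∧ s.Nonempty
  · simp only [dif_pos h]
    exact Continuous.finset_inf'_apply h.2 fun v _ => (continuous_apply v).max continuous_const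
  · simp only [dif_neg h]
    exact continuous_const

lemma image_image (K : GOSC G) (g : G) (s : Finset K.V) :
    (s.image (K.smul g)).image (K.smul g⁻¹) = s := by
  rw [Finset.image_image]
  have : K.smul g⁻¹ ∘ K.smul g = id := by
    funext v
    simp [← K.smul_mul, K.smul_one]
  rw [this, Finset.image_id]

lemma mn_image (K : GOSC G) (g : G) (s : Finset K.V) (f : K.V → ℝ) :
    K.mn (s.image (K.smul g)) f = K.mn s (fun v => f (K.smul g v)) := by
  have hf : s.image (K.smul g) ∈ K.faces ↔ s ∈ K.faces := by
    refine ⟨fun h => ?_, K.smul_faces g s⟩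
    have := K.smul_faces g⁻¹ _ h
    rwa [image_image] at this
  unfold mn
  by_cases h : s ∉ K.faces ∧ s.Nonempty
  · have h' : s.image (K.smul g) ∉ K.faces ∧ (s.image (K.smul g)).Nonempty :=
      ⟨fun h1 => h.1 (hf.1 h1), h.2.image _⟩
    rw [dif_pos h, dif_pos h', Finset.inf'_image]
    rfl
  · have h' : ¬ (s.image (K.smul g) ∉ K.faces ∧ (s.image (K.smul g)).Nonempty) := by
      rw [hf, Finset.image_nonempty]; exact h
    rw [dif_neg h, dif_neg h']

/-- the cutoff level -/
noncomputable def cut (K : GOSC G) (f : K.V → ℝ) : ℝ := ∑ s : Finset K.V, K.mn s f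

lemma cut_cont (K : GOSC G) : Continuous K.cut :=
  continuous_finsetSum _ fun s _ => K.mn_cont s

lemma cut_nonneg (K : GOSC G) (f : K.V → ℝ) : 0 ≤ K.cut f :=
  Finset.sum_nonneg fun s _ => K.mn_nonneg s f

lemma cut_smul (K : GOSC G) (g : G) (f : K.V → ℝ) :
    K.cut (fun v => f (K.smul g v)) = K.cut f := by
  unfold cut
  simp only [← mn_image]
  refine Function.Bijective.sum_comp (e := fun s : Finset K.V => s.image (K.smul g)) ?_
    (fun s => K.mn s f)
  refine Function.bijective_iff_has_inverse.2 ⟨fun s => s.image (K.smul g⁻¹),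
    fun s => K.image_image g s, fun s => ?_⟩
  have := K.image_image g⁻¹ s
  rwa [inv_inv] at this

lemma cut_real (K : GOSC G) (f : K.Real) : K.cut f.val = 0 := by
  refine Finset.sum_eq_zero fun s _ => ?_
  unfold mn
  split_ifs with h
  · obtain ⟨hnn, hsum, t, ht, hsupp⟩ := f.prop
    have : ∃ v ∈ s, f.val v = 0 := by
      by_contra! hc
      exact h.1 (K.down_closed t ht s (fun v hv => hsupp v (hc v hv)) h.2)
    obtain ⟨v, hv, hv0⟩ := this
    refine le_antisymm ?_ (Finset.le_inf' _ _ fun v _ => le_max_right _ _)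
    refine (Finset.inf'_le _ hv).trans ?_
    simp [hv0]
  · rfl

/-- truncated function -/
noncomputable def trunc (K : GOSC G) (f : K.V → ℝ) (v : K.V) : ℝ := max (f v - K.cut f) 0

lemma trunc_cont (K : GOSC G) (v : K.V) : Continuous (fun f => K.trunc f v) :=
  ((continuous_apply v).sub K.cut_cont).max continuous_const

/-- total mass -/
noncomputable def mass (K : GOSC G) (f : K.V → ℝ) : ℝ := ∑ v, K.trunc f v

lemma mass_cont (K : GOSC G) : Continuous K.mass :=
  continuous_finsetSum _ fun v _ => K.trunc_cont v

lemma trunc_smul (K : GOSC G) (g : G) (f : K.V → ℝ) (v : K.V) :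
    K.trunc (fun v => f (K.smul g v)) v = K.trunc f (K.smul g v) := by
  unfold trunc; rw [cut_smul]

lemma mass_smul (K : GOSC G) (g : G) (f : K.V → ℝ) :
    K.mass (fun v => f (K.smul g v)) = K.mass f := by
  unfold mass
  simp only [trunc_smul]
  exact Equiv.sum_comp (K.permOf g) (K.trunc f)

lemma trunc_real (K : GOSC G) (f : K.Real) (v : K.V) : K.trunc f.val v = f.val v := by
  unfold trunc
  rw [cut_real, sub_zero]
  exact max_eq_left (f.prop.1 v)

lemma mass_real (K : GOSC G) (f : K.Real) : K.mass f.val = 1 := by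
  unfold mass
  simp only [trunc_real]
  exact f.prop.2.1

lemma retr_mem (K : GOSC G) (f : K.V → ℝ) (h : 0 < K.mass f) :
    (fun v => K.trunc f v / K.mass f) ∈ K.realSet := by
  refine ⟨fun v => div_nonneg (le_max_right _ _) h.le, ?_,
    Finset.univ.filter (fun v => K.trunc f v ≠ 0), ?_, ?_⟩
  · rw [← Finset.sum_div]; exact div_self h.ne'
  · have hne : (Finset.univ.filter (fun v => K.trunc f v ≠ 0)).Nonempty := by
      by_contra hc
      rw [Finset.not_nonempty_iff_eq_empty, Finset.filter_eq_empty_iff] at hc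
      refine h.ne' (Finset.sum_eq_zero fun v hv => ?_)
      simpa using hc hv
    by_contra hf
    set s := Finset.univ.filter (fun v => K.trunc f v ≠ 0) with hs
    have h1 : K.mn s f ≤ K.cut f :=
      Finset.single_le_sum (f := fun s => K.mn s f) (fun s _ => K.mn_nonneg s f)
        (Finset.mem_univ s)
    have h2 : K.cut f < K.mn s f := by
      unfold mn
      rw [dif_pos ⟨hf, hne⟩, Finset.lt_inf'_iff]
      intro v hv
      have hv' : K.trunc f v ≠ 0 := by simpa [hs] using hv
      refine lt_max_of_lt_left ?_
      by_contra hle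
      exact hv' (max_eq_right (by linarith))
    exact absurd h1 (not_le.2 h2)
  · intro v hv
    simp only [Finset.mem_filter, Finset.mem_univ, true_and]
    intro h0
    exact hv (by simp [h0])

/-- the neighbourhood retraction -/
noncomputable def retr (K : GOSC G) (f : {f : K.V → ℝ // 0 < K.mass f}) : K.Real :=
  ⟨fun v => K.trunc f.1 v / K.mass f.1, K.retr_mem f.1 f.2⟩

lemma retr_cont (K : GOSC G) : Continuous K.retr := by
  refine Continuous.subtype_mk ?_ _
  refine continuous_pi fun v => ?_
  exact ((K.trunc_cont v).comp continuous_subtype_val).div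
    (K.mass_cont.comp continuous_subtype_val) fun f => f.2.ne'

lemma retr_real (K : GOSC G) (f : {f : K.V → ℝ // 0 < K.mass f}) (x : K.Real)
    (h : f.1 = x.val) : K.retr f = x := by
  apply Subtype.ext
  funext v
  change K.trunc f.1 v / K.mass f.1 = x.val v
  rw [h, trunc_real, mass_real, div_one]

lemma retr_smul (K : GOSC G) (g : G) (f f' : {f : K.V → ℝ // 0 < K.mass f})
    (h : f'.1 = fun v => f.1 (K.smul g⁻¹ v)) : K.retr f' = g • K.retr f := by
  apply Subtype.ext
  funext v
  change K.trunc f'.1 v / K.mass f'.1 = K.trunc f.1 (K.smul g⁻¹ v) / K.mass f.1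
  rw [h, trunc_smul, mass_smul]

/-- A closed invariant set with a homotopy extends to an ambient equivariant map. -/
lemma exists_ext [Finite G] (K : GOSC G) (C : Set (K.Real × K.Real)) (hC : IsClosed C)
    (hinv : GInvariant G C) (h : ProjGHomotopic K C) :
    ∃ φ : (K.Real × K.Real) × unitInterval → (K.V → ℝ), Continuous φ ∧
      (∀ z, φ (z, 0) = z.1.val) ∧ (∀ z, φ (z, 1) = z.2.val) ∧
      (∀ (g : G) z t, φ (g • z, t) = fun v => φ (z, t) (K.smul g⁻¹ v)) ∧
      (∀ z ∈ C, ∀ t, ∃ x : K.Real, φ (z, t) = x.val) := by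
  obtain ⟨F, hF, hF0, hF1, hFg⟩ := h
  have := Fintype.ofFinite G
  let e : C × unitInterval → (K.Real × K.Real) × unitInterval := Prod.map Subtype.val id
  have he : Topology.IsClosedEmbedding e :=
    hC.isClosedEmbedding_subtypeVal.prodMap Topology.IsClosedEmbedding.id
  let F' : C(C × unitInterval, K.V → ℝ) := ⟨fun p => (F p).val, K.continuous_val.comp hF⟩
  obtain ⟨φ0, hφ0⟩ := F'.exists_extension he
  have hφ0' : ∀ (z : K.Real × K.Real) (hz : z ∈ C) (t : unitInterval),
      φ0 (z, t) = (F (⟨z, hz⟩, t)).val := fun z hz t =>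
    DFunLike.congr_fun hφ0 ((⟨z, hz⟩ : C), t)
  let φ1 : (K.Real × K.Real) × unitInterval → (K.V → ℝ) := fun p v =>
    (∑ g : G, φ0 (g • p.1, p.2) (K.smul g v)) / (Fintype.card G : ℝ)
  have hφ1c : Continuous φ1 := by
    refine continuous_pi fun v => Continuous.div_const (continuous_finsetSum _ fun g _ => ?_) _
    refine (continuous_apply _).comp (φ0.continuous.comp ?_)
    exact (continuous_fst.const_smul g).prodMk continuous_snd
  have hφ1g : ∀ (g : G) z t v, φ1 (g • z, t) v = φ1 (z, t) (K.smul g⁻¹ v) := by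
    intro g z t v
    change (∑ k : G, φ0 (k • g • z, t) (K.smul k v)) / _ =
      (∑ k : G, φ0 (k • z, t) (K.smul k (K.smul g⁻¹ v))) / _
    congr 1
    rw [← Equiv.sum_comp (Equiv.mulRight g)
      (fun k => φ0 (k • z, t) (K.smul k (K.smul g⁻¹ v)))]
    refine Finset.sum_congr rfl fun k _ => ?_
    simp only [Equiv.coe_mulRight, ← K.smul_mul, mul_smul, mul_inv_cancel_right]
  have hφ1C : ∀ (z : K.Real × K.Real) (hz : z ∈ C) (t : unitInterval),
      φ1 (z, t) = (F (⟨z, hz⟩, t)).val := by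
    intro z hz t
    funext v
    have : ∀ g : G, φ0 (g • z, t) (K.smul g v) = (F (⟨z, hz⟩, t)).val v := by
      intro g
      rw [hφ0' _ (hinv g z hz) t, hFg g ⟨z, hz⟩ (hinv g z hz) t, smul_apply, ← K.smul_mul,
        inv_mul_cancel, K.smul_one]
    change (∑ g : G, φ0 (g • z, t) (K.smul g v)) / _ = _
    simp only [this, Finset.sum_const, Finset.card_univ, nsmul_eq_mul]
    have : (Fintype.card G : ℝ) ≠ 0 := by exact_mod_cast Fintype.card_ne_zero
    field_simp
  refine ⟨fun p v => φ1 p v + (1 - (p.2 : ℝ)) * (p.1.1.val v - φ1 (p.1, 0) v)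
    + (p.2 : ℝ) * (p.1.2.val v - φ1 (p.1, 1) v), ?_, ?_, ?_, ?_, ?_⟩
  · refine continuous_pi fun v => ?_
    have a1 : Continuous fun p : (K.Real × K.Real) × unitInterval => φ1 p v :=
      (continuous_apply v).comp hφ1c
    have a2 : Continuous fun p : (K.Real × K.Real) × unitInterval => φ1 (p.1, 0) v :=
      a1.comp (continuous_fst.prodMk continuous_const)
    have a3 : Continuous fun p : (K.Real × K.Real) × unitInterval => φ1 (p.1, 1) v :=
      a1.comp (continuous_fst.prodMk continuous_const)
    have a4 : Continuous fun p : (K.Real × K.Real) × unitInterval => p.1.1.val v :=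
      (continuous_apply v).comp (K.continuous_val.comp (continuous_fst.comp continuous_fst))
    have a5 : Continuous fun p : (K.Real × K.Real) × unitInterval => p.1.2.val v :=
      (continuous_apply v).comp (K.continuous_val.comp (continuous_snd.comp continuous_fst))
    have a6 : Continuous fun p : (K.Real × K.Real) × unitInterval => (p.2 : ℝ) :=
      continuous_subtype_val.comp continuous_snd
    exact (a1.add ((continuous_const.sub a6).mul (a4.sub a2))).add (a6.mul (a5.sub a3))
  · intro z; funext v; simp
  · intro z; funext v; simp
  · intro g z t
    funext v
    simp only [hφ1g, Prod.smul_fst, Prod.smul_snd, smul_apply]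
  · intro z hz t
    refine ⟨F (⟨z, hz⟩, t), ?_⟩
    funext v
    simp only [hφ1C z hz, hF0, hF1]
    ring

lemma exists_open [Finite G] (K : GOSC G) (C : Set (K.Real × K.Real)) (hC : IsClosed C)
    (hinv : GInvariant G C) (h : ProjGHomotopic K C) :
    ∃ U : Set (K.Real × K.Real), C ⊆ U ∧ IsOpen U ∧ GInvariant G U ∧
      EqNavigable G K.Real U := by
  obtain ⟨φ, hφ, h0, h1, hg, hφC⟩ := K.exists_ext C hC hinv h
  let O : Set ((K.Real × K.Real) × unitInterval) := {p | 0 < K.mass (φ p)}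
  have hO : IsOpen O := isOpen_lt continuous_const (K.mass_cont.comp hφ)
  let U : Set (K.Real × K.Real) := {z | ∀ t, (z, t) ∈ O}
  have hUo : IsOpen U := by
    have : U = (Prod.fst '' Oᶜ)ᶜ := by
      ext z
      simp [U]
    rw [this, isOpen_compl_iff]
    exact isClosedMap_fst_of_compactSpace _ hO.isClosed_compl
  refine ⟨U, ?_, hUo, ?_, ?_⟩
  · intro z hz t
    obtain ⟨x, hx⟩ := hφC z hz t
    change 0 < K.mass (φ (z, t))
    rw [hx, mass_real]
    exact one_pos
  · intro g z hz t
    change 0 < K.mass (φ (g • z, t))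
    rw [hg, mass_smul]
    exact hz t
  · let H : C(U × unitInterval, K.Real) :=
      ⟨fun p => K.retr ⟨φ (p.1.1, p.2), p.1.2 p.2⟩, K.retr_cont.comp
        (Continuous.subtype_mk (hφ.comp
          ((continuous_subtype_val.comp continuous_fst).prodMk continuous_snd)) _)⟩
    refine ⟨fun u => H.curry u, H.curry.continuous, fun u => ⟨?_, ?_⟩, ?_⟩
    · exact K.retr_real _ _ (h0 _)
    · exact K.retr_real _ _ (h1 _)
    · intro g u hu t
      exact K.retr_smul g _ _ (hg _ _ _)

lemma exists_closed [Finite G] (K : GOSC G) (n : ℕ) (U : Fin n → Set (K.Real × K.Real))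
    (hU : ∀ i, IsOpen (U i)) (hinv : ∀ i, GInvariant G (U i)) (hc : (⋃ i, U i) = Set.univ) :
    ∃ C : Fin n → Set (K.Real × K.Real), (∀ i, IsClosed (C i)) ∧ (∀ i, GInvariant G (C i)) ∧
      (⋃ i, C i) = Set.univ ∧ ∀ i, C i ⊆ U i := by
  obtain ⟨D, hD, hDc, hDU⟩ := exists_iUnion_eq_closed_subset hU
    (fun x => Set.toFinite _) hc
  refine ⟨fun i => ⋃ g : G, (fun z => g • z) ⁻¹' D i, fun i => ?_, fun i => ?_, ?_, fun i => ?_⟩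
  · exact isClosed_iUnion_of_finite fun g => (hDc i).preimage (continuous_const_smul g)
  · intro g z hz
    obtain ⟨k, hk⟩ := Set.mem_iUnion.1 hz
    refine Set.mem_iUnion.2 ⟨k * g⁻¹, ?_⟩
    change (k * g⁻¹) • g • z ∈ D i
    rw [smul_smul, inv_mul_cancel_right]
    exact hk
  · rw [Set.eq_univ_iff_forall]
    intro z
    have hz : z ∈ ⋃ i, D i := hD ▸ Set.mem_univ z
    obtain ⟨i, hi⟩ := Set.mem_iUnion.1 hz
    refine Set.mem_iUnion.2 ⟨i, Set.mem_iUnion.2 ⟨1, ?_⟩⟩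
    change (1 : G) • z ∈ D i
    rwa [one_smul]
  · intro z hz
    obtain ⟨k, hk⟩ := Set.mem_iUnion.1 hz
    have := hinv i k⁻¹ _ (hDU i hk)
    simpa using this

lemma navigable_homotopic (K : GOSC G) (U C : Set (K.Real × K.Real)) (hCU : C ⊆ U)
    (h : EqNavigable G K.Real U) : ProjGHomotopic K C := by
  obtain ⟨s, hs, hs01, hsg⟩ := h
  refine ⟨fun p => s ⟨p.1.1, hCU p.1.2⟩ p.2, ?_, fun u => (hs01 _).1, fun u => (hs01 _).2, ?_⟩
  · have h1 : Continuous fun p : C × unitInterval => s ⟨p.1.1, hCU p.1.2⟩ :=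
      hs.comp (Continuous.subtype_mk (continuous_subtype_val.comp continuous_fst) _)
    exact h1.eval continuous_snd
  · intro g u hu t
    exact hsg g ⟨u.1, hCU u.2⟩ (hCU hu) t

end Helpers

end GOSC

/-- Let `G` be a finite group and `K` an ordered `G`-simplicial complex.
Then `TC_G(|K|) = C_G(|K|)`: the equivariant topological complexity of `|K|` can be computed
using closed invariant covers on which the two projections are `G`-homotopic. -/
theorem eqTC_eq_closedTC (G : Type) [Group G] [Finite G] (K : GOSC G) :
    eqTC G K.Real = closedTC K := by
  unfold eqTC closedTC
  congr 1
  ext k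
  constructor
  · rintro ⟨n, rfl, U, hU, hinv, hc, hn⟩
    obtain ⟨C, hC, hCinv, hCc, hCU⟩ := K.exists_closed n U hU hinv hc
    exact ⟨n, rfl, C, hC, hCinv, hCc, fun i => K.navigable_homotopic _ _ (hCU i) (hn i)⟩
  · rintro ⟨n, rfl, C, hC, hinv, hc, hn⟩
    choose U hCU hU hUinv hUn using fun i => K.exists_open (C i) (hC i) (hinv i) (hn i)
    refine ⟨n, rfl, U, hU, hUinv, ?_, hUn⟩
    exact Set.univ_subset_iff.1 (hc ▸ Set.iUnion_mono hCU)
end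

section
/- Let G be a finite group, P a finite G-poset, and K = K(P) the order complex of P. If P is G-connected, then the geometric realization |K| is G-connected. -/
/-! ### Order complexes of finite G-posets -/

/-- The order complex `K(P)` of a finite `G`-poset `P` (a finite poset with `G` acting by
order-preserving maps): the ordered `G`-simplicial complex whose vertices are the elements of
`P` and whose simplices are the nonempty totally ordered subsets (chains) of `P`. -/
noncomputable def orderComplexG (G : Type) [Group G] (P : Type) [Fintype P] [PartialOrder P]
    [MulAction G P] (hmono : ∀ g : G, Monotone (fun p : P => g • p)) : GOSC G :=
  letI : DecidableEq P := Classical.decEq P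
  { V := P
    faces := {s | s.Nonempty ∧ ∀ x ∈ s, ∀ y ∈ s, x ≤ y ∨ y ≤ x}
    singleton_mem := fun v => ⟨Finset.singleton_nonempty v, by
      intro x hx y hy
      rw [Finset.mem_singleton] at hx hy
      subst hx; subst hy; exact Or.inl le_rfl⟩
    nonempty_of_mem := fun s hs => hs.1
    down_closed := fun s hs t hts htne => ⟨htne, fun x hx y hy => hs.2 x (hts hx) y (hts hy)⟩
    face_chain := fun s hs => hs.2
    smul := fun g p => g • p
    smul_one := fun p => one_smul G p
    smul_mul := fun g h p => mul_smul g h p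
    smul_mono := fun g x y hxy => hmono g hxy
    smul_faces := fun g s hs => ⟨hs.1.image _, by
      intro x hx y hy
      rcases Finset.mem_image.mp hx with ⟨a, ha, rfl⟩
      rcases Finset.mem_image.mp hy with ⟨b, hb, rfl⟩
      rcases hs.2 a ha b hb with h | h
      · exact Or.inl (hmono g h)
      · exact Or.inr (hmono g h)⟩ }

namespace GOSC

variable {G : Type} [Group G]

/-- The vertex `x`, as a point of the geometric realization. -/
noncomputable def vertexPoint (K : GOSC G) (x : K.V) : K.Real :=
  ⟨fun v => if v = x then 1 else 0, by
    refine ⟨fun v => by positivity, by simp, {x}, K.singleton_mem x, ?_⟩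
    intro v hv
    rw [Finset.mem_singleton]
    by_contra h
    exact hv (if_neg h)⟩

/-- The open star of a vertex `x` in `|K|`: the union of the open simplices `σ°` over all
simplices `σ` containing `x`; equivalently, the set of points whose barycentric coordinate
at `x` is nonzero. -/
def star (K : GOSC G) (x : K.V) : Set K.Real :=
  {f | f.val x ≠ 0}

/-- The saturation `G · star(x)` of the open star of a vertex. -/
def gStar (K : GOSC G) (x : K.V) : Set K.Real :=
  {h | ∃ g : G, ∃ f ∈ K.star x, h = g • f}

/-- The geometric realization `|K|` is `G`-connected: for every subgroup `H ≤ G`, the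
fixed-point set `|K|^H` is path-connected. -/
def RealGConnected (K : GOSC G) : Prop :=
  ∀ H : Subgroup G, ∀ a ∈ {y : K.Real | ∀ h ∈ H, h • y = y},
    ∀ b ∈ {y : K.Real | ∀ h ∈ H, h • y = y},
      JoinedIn {y : K.Real | ∀ h ∈ H, h • y = y} a b

end GOSC

/-- A zigzag of order relations between `x` and `y` staying inside the set `S`. -/
def ZigzagIn {P : Type*} [PartialOrder P] (S : Set P) (x y : P) : Prop :=
  Relation.ReflTransGen (fun a b => a ∈ S ∧ b ∈ S ∧ (a ≤ b ∨ b ≤ a)) x y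

/-- A finite `G`-poset `P` is `G`-connected: for every subgroup `H ≤ G`, the fixed-point set
`P^H` is order-connected (any two of its points are joined by a zigzag of order relations in
`P^H`; equivalently, `P^H` with its down-set topology is path-connected). -/
def PosetGConnected (G P : Type*) [Group G] [PartialOrder P] [MulAction G P] : Prop :=
  ∀ H : Subgroup G, ∀ x ∈ {p : P | ∀ h ∈ H, h • p = p}, ∀ y ∈ {p : P | ∀ h ∈ H, h • p = p},
    ZigzagIn {p : P | ∀ h ∈ H, h • p = p} x y

lemma joinedIn_of_common_face {G : Type} [Group G] (K : GOSC G) (H : Subgroup G) (a b : K.Real)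
    (ha : ∀ h ∈ H, h • a = a) (hb : ∀ h ∈ H, h • b = b)
    (s : Finset K.V) (hs : s ∈ K.faces) (has : ∀ v, a.val v ≠ 0 → v ∈ s)
    (hbs : ∀ v, b.val v ≠ 0 → v ∈ s) :
    JoinedIn {y : K.Real | ∀ h ∈ H, h • y = y} a b := by
  have hmem : ∀ t : unitInterval,
      (fun v => (1 - (t : ℝ)) * a.val v + (t : ℝ) * b.val v) ∈ K.realSet := by
    intro t
    have h0 := t.2.1
    have h1 : (0 : ℝ) ≤ 1 - (t : ℝ) := sub_nonneg.mpr t.2.2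
    refine ⟨fun v => ?_, ?_, s, hs, fun v hv => ?_⟩
    · exact add_nonneg (mul_nonneg h1 (a.2.1 v)) (mul_nonneg h0 (b.2.1 v))
    · rw [Finset.sum_add_distrib, ← Finset.mul_sum, ← Finset.mul_sum, a.2.2.1, b.2.2.1]
      ring
    · by_contra hvs
      have h2 : a.val v = 0 := by
        by_contra h; exact hvs (has v h)
      have h3 : b.val v = 0 := by
        by_contra h; exact hvs (hbs v h)
      exact hv (by simp [h2, h3])
  have hcont : Continuous (fun t : unitInterval => (⟨_, hmem t⟩ : K.Real)) := by
    refine Continuous.subtype_mk ?_ hmem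
    fun_prop
  refine ⟨{ toFun := fun t => ⟨_, hmem t⟩, continuous_toFun := hcont,
            source' := ?_, target' := ?_ }, ?_⟩
  · apply Subtype.ext; funext v; simp
  · apply Subtype.ext; funext v; simp
  · intro t h hh
    apply Subtype.ext
    funext v
    have h1 : a.val (K.smul h⁻¹ v) = a.val v := by
      rw [← GOSC.smul_apply, ha h hh]
    have h2 : b.val (K.smul h⁻¹ v) = b.val v := by
      rw [← GOSC.smul_apply, hb h hh]
    rw [GOSC.smul_apply]
    change (1 - (t : ℝ)) * a.val (K.smul h⁻¹ v) + (t : ℝ) * b.val (K.smul h⁻¹ v) =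
      (1 - (t : ℝ)) * a.val v + (t : ℝ) * b.val v
    rw [h1, h2]

lemma smul_eq_of_le_smul_finite {G P : Type} [Group G] [Finite G] [PartialOrder P] [MulAction G P]
    (hmono : ∀ g : G, Monotone (fun p : P => g • p)) (g : G) (p : P) (h : p ≤ g • p) :
    g • p = p := by
  have key : ∀ k : ℕ, p ≤ g ^ k • p := by
    intro k
    induction k with
    | zero => simp
    | succ k ih =>
      rw [pow_succ', mul_smul]
      exact h.trans (hmono g ih)
  have h1 := key (orderOf g - 1)
  have h2 : g • p ≤ g • (g ^ (orderOf g - 1) • p) := hmono g h1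
  rw [← mul_smul, ← pow_succ', Nat.sub_add_cancel (orderOf_pos g), pow_orderOf_eq_one,
    one_smul] at h2
  exact le_antisymm h2 h

lemma smul_eq_of_comparable {G P : Type} [Group G] [Finite G] [PartialOrder P] [MulAction G P]
    (hmono : ∀ g : G, Monotone (fun p : P => g • p)) (g : G) (p : P)
    (h : p ≤ g • p ∨ g • p ≤ p) : g • p = p := by
  rcases h with h | h
  · exact smul_eq_of_le_smul_finite hmono g p h
  · have h1 : g⁻¹ • g • p ≤ g⁻¹ • p := hmono g⁻¹ h
    rw [inv_smul_smul] at h1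
    have h2 := smul_eq_of_le_smul_finite hmono g⁻¹ p h1
    exact (inv_smul_eq_iff.mp h2).symm

lemma vertexPoint_fixed {G : Type} [Group G] (K : GOSC G) (H : Subgroup G) (x : K.V)
    (hx : ∀ h ∈ H, K.smul h x = x) : ∀ h ∈ H, h • K.vertexPoint x = K.vertexPoint x := by
  intro h hh
  apply Subtype.ext
  funext v
  rw [GOSC.smul_apply]
  have : K.smul h⁻¹ v = x ↔ v = x := by
    constructor
    · intro e
      have := hx h hh
      rw [← e, ← K.smul_mul, mul_inv_cancel, K.smul_one] at this
      rw [this, e]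
    · rintro rfl
      exact hx _ (H.inv_mem hh)
  simp [GOSC.vertexPoint, this]

lemma vertexPoint_ne_zero {G : Type} [Group G] (K : GOSC G) (x v : K.V)
    (hv : (K.vertexPoint x).val v ≠ 0) : v = x := by
  by_contra h
  exact hv (if_neg h)

lemma exists_fixed_vertex {G P : Type} [Group G] [Finite G]
    [Fintype P] [PartialOrder P] [MulAction G P]
    (hmono : ∀ g : G, Monotone (fun p : P => g • p)) (H : Subgroup G)
    (a : (orderComplexG G P hmono).Real) (ha : ∀ h ∈ H, h • a = a) :
    ∃ x : P, (∀ h ∈ H, h • x = x) ∧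
      JoinedIn {y : (orderComplexG G P hmono).Real | ∀ h ∈ H, h • y = y} a
        ((orderComplexG G P hmono).vertexPoint x) := by
  obtain ⟨hnn, hsum, s, hs, hsupp⟩ := a.2
  have hex : ∃ x, a.val x ≠ 0 := by
    by_contra hcon
    push Not at hcon
    rw [Finset.sum_eq_zero (fun v _ => hcon v)] at hsum
    exact zero_ne_one hsum
  obtain ⟨x, hx⟩ := hex
  have hfix : ∀ h ∈ H, (orderComplexG G P hmono).smul h x = x := by
    intro h hh
    have h1 : a.val ((orderComplexG G P hmono).smul h x) ≠ 0 := by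
      have := GOSC.smul_apply _ h⁻¹ a x
      rw [inv_inv, ha _ (H.inv_mem hh)] at this
      rw [← this]; exact hx
    exact smul_eq_of_comparable (P := P) hmono h x
      (hs.2 _ (hsupp _ hx) _ (hsupp _ h1))
  refine ⟨x, hfix, joinedIn_of_common_face _ H _ _ ha (vertexPoint_fixed _ H x hfix) s hs hsupp ?_⟩
  intro v hv
  rw [vertexPoint_ne_zero _ _ _ hv]
  exact hsupp x hx

/-- Let `G` be a finite group, `P` a finite `G`-poset, and `K = K(P)` its
order complex. If `P` is `G`-connected, then the geometric realization `|K|` is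
`G`-connected. -/
theorem realGConnected_of_posetGConnected (G P : Type) [Group G] [Finite G]
    [Fintype P] [PartialOrder P] [MulAction G P]
    (hmono : ∀ g : G, Monotone (fun p : P => g • p))
    (hconn : PosetGConnected G P) :
    (orderComplexG G P hmono).RealGConnected := by
  intro H a ha b hb
  obtain ⟨x, hx, hax⟩ := exists_fixed_vertex hmono H a ha
  obtain ⟨y, hy, hby⟩ := exists_fixed_vertex hmono H b hb
  refine (hax.trans ?_).trans hby.symm
  have hz := hconn H x hx y hy
  unfold ZigzagIn at hz
  clear hby hy
  induction hz with
  | refl => exact JoinedIn.refl (vertexPoint_fixed (orderComplexG G P hmono) H x hx)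
  | @tail c d _ hcd ih =>
    obtain ⟨hc, hd, hle⟩ := hcd
    refine ih.trans ?_
    classical
    refine joinedIn_of_common_face (orderComplexG G P hmono) H _ _
      (vertexPoint_fixed (orderComplexG G P hmono) H c hc) (vertexPoint_fixed (orderComplexG G P hmono) H d hd)
      (({c, d} : Finset P)) ⟨⟨c, by simp⟩, ?_⟩ ?_ ?_
    · intro u hu w hw
      simp only [Finset.mem_insert, Finset.mem_singleton] at hu hw
      rcases hu with rfl | rfl <;> rcases hw with rfl | rfl
      · exact Or.inl le_rfl
      · exact hle
      · exact hle.symm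
      · exact Or.inl le_rfl
    · intro v hv
      rw [vertexPoint_ne_zero _ _ _ hv]
      exact Finset.mem_insert_self (α := P) c {d}
    · intro v hv
      rw [vertexPoint_ne_zero _ _ _ hv]
      exact Finset.mem_insert_of_mem (α := P) (Finset.mem_singleton_self d)
end

section
/- Let G be a finite group, P a finite G-poset, K = K(P) its order complex, and x a vertex of K (i.e. an element of P). Then the saturation G·star(x) of the open star of x is a G-categorical subset of |K|: the inclusion G·star(x) ↪ |K| is G-homotopic to a map taking values in the single orbit O(x). -/
namespace GOSC

variable {G : Type} [Group G]

lemma smul_le_antisymm (K : GOSC G) [Finite G] (g : G) (x : K.V) (h : x ≤ K.smul g x) :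
    K.smul g x = x := by
  have h1 : ∀ n : ℕ, K.smul g x ≤ K.smul (g ^ (n + 1)) x := by
    intro n
    induction n with
    | zero => simp
    | succ n ih =>
      have h2 := K.smul_mono g _ _ (h.trans ih)
      rwa [← K.smul_mul, ← pow_succ'] at h2
  have h3 := h1 (orderOf g - 1)
  rw [Nat.sub_add_cancel (orderOf_pos g), pow_orderOf_eq_one, K.smul_one] at h3
  exact le_antisymm h3 h

lemma smul_eq_of_le (K : GOSC G) [Finite G] (g h : G) (x : K.V)
    (hle : K.smul g x ≤ K.smul h x) : K.smul g x = K.smul h x := by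
  have h2 := K.smul_mono g⁻¹ _ _ hle
  rw [← K.smul_mul, ← K.smul_mul, inv_mul_cancel, K.smul_one] at h2
  have h3 := K.smul_le_antisymm _ _ h2
  have h4 := congrArg (K.smul g) h3
  rw [← K.smul_mul, mul_inv_cancel_left] at h4
  exact h4.symm

open Classical in
/-- The restriction of barycentric coordinates to the orbit of `x`. -/
noncomputable def orbW (K : GOSC G) (x : K.V) (f : K.V → ℝ) (v : K.V) : ℝ :=
  if ∃ g : G, v = K.smul g x then f v else 0

lemma orbW_nonneg (K : GOSC G) (x : K.V) (f : K.Real) (v : K.V) :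
    0 ≤ K.orbW x f.val v := by
  unfold orbW
  split_ifs
  · exact f.prop.1 v
  · exact le_rfl

lemma orbW_smul (K : GOSC G) (x : K.V) (f : K.Real) (g : G) (v : K.V) :
    K.orbW x (g • f).val v = K.orbW x f.val (K.smul g⁻¹ v) := by
  unfold orbW
  have : (∃ h : G, v = K.smul h x) ↔ ∃ h : G, K.smul g⁻¹ v = K.smul h x := by
    constructor
    · rintro ⟨h, rfl⟩
      exact ⟨g⁻¹ * h, by rw [K.smul_mul]⟩
    · rintro ⟨h, hh⟩
      refine ⟨g * h, ?_⟩
      rw [K.smul_mul, ← hh, ← K.smul_mul, mul_inv_cancel, K.smul_one]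
  rw [smul_apply]
  by_cases hO : ∃ h : G, v = K.smul h x
  · rw [if_pos hO, if_pos (this.mp hO)]
  · rw [if_neg hO, if_neg (fun h => hO (this.mpr h))]

lemma orbW_sum_smul (K : GOSC G) (x : K.V) (f : K.Real) (g : G) :
    ∑ v, K.orbW x (g • f).val v = ∑ v, K.orbW x f.val v := by
  simp only [orbW_smul]
  exact Equiv.sum_comp (K.permOf g⁻¹) (K.orbW x f.val)

lemma mem_gStar (K : GOSC G) (x : K.V) (f : K.Real) (hf : f ∈ K.gStar x) :
    ∃ g : G, f.val (K.smul g x) ≠ 0 := by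
  obtain ⟨g, f, hf, rfl⟩ := hf
  refine ⟨g, ?_⟩
  rw [smul_apply, ← K.smul_mul, inv_mul_cancel, K.smul_one]
  exact hf

lemma orbW_sum_pos (K : GOSC G) (x : K.V) (f : K.Real) (hf : f ∈ K.gStar x) :
    0 < ∑ v, K.orbW x f.val v := by
  obtain ⟨g, hg⟩ := K.mem_gStar x f hf
  refine Finset.sum_pos' (fun v _ => K.orbW_nonneg x f v) ⟨K.smul g x, Finset.mem_univ _, ?_⟩
  unfold orbW
  rw [if_pos ⟨g, rfl⟩]
  exact lt_of_le_of_ne (f.prop.1 _) hg.symm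

/-- The straight-line contraction of the saturated star onto the orbit. -/
noncomputable def starHtpy (K : GOSC G) (x : K.V) (p : K.gStar x × unitInterval) : K.Real :=
  ⟨fun v => (1 - (p.2 : ℝ)) * p.1.val.val v +
      (p.2 : ℝ) * (K.orbW x p.1.val.val v / ∑ w, K.orbW x p.1.val.val w), by
    obtain ⟨⟨f, hf⟩, t⟩ := p
    have hS := K.orbW_sum_pos x f hf
    obtain ⟨hnn, hsum, s, hs, hsupp⟩ := f.prop
    refine ⟨fun v => ?_, ?_, s, hs, fun v hv => hsupp v fun h0 => hv ?_⟩
    · have h1 := hnn v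
      have h2 := K.orbW_nonneg x f v
      have h3 : 0 ≤ 1 - (t : ℝ) := sub_nonneg.mpr t.2.2
      have h4 : 0 ≤ (t : ℝ) := t.2.1
      dsimp only
      positivity
    · dsimp only
      rw [Finset.sum_add_distrib, ← Finset.mul_sum, ← Finset.mul_sum, ← Finset.sum_div, hsum,
        div_self hS.ne']
      ring
    · simp [orbW, h0]⟩

lemma continuous_starHtpy (K : GOSC G) (x : K.V) : Continuous (K.starHtpy x) := by
  have hc : ∀ v, Continuous (fun p : K.gStar x × unitInterval => p.1.val.val v) := by
    intro v
    have h1 : Continuous (fun f : K.Real => f.val) := continuous_subtype_val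
    exact (continuous_apply v).comp (h1.comp (continuous_subtype_val.comp continuous_fst))
  have hw : ∀ v, Continuous (fun p : K.gStar x × unitInterval => K.orbW x p.1.val.val v) := by
    intro v
    unfold orbW
    split_ifs
    · exact hc v
    · exact continuous_const
  have ht : Continuous (fun p : K.gStar x × unitInterval => (p.2 : ℝ)) :=
    continuous_subtype_val.comp continuous_snd
  refine Continuous.subtype_mk (continuous_pi fun v => ?_) _
  exact ((continuous_const.sub ht).mul (hc v)).add
    (ht.mul ((hw v).div (continuous_finsetSum _ fun w _ => hw w)
      fun p => (K.orbW_sum_pos x p.1.val p.1.prop).ne'))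

theorem gStar_aux (K : GOSC G) [Finite G] (x : K.V) :
    GInvariant G (K.gStar x) ∧ GCategoricalAt G K.Real (K.gStar x) (K.vertexPoint x) := by
  refine ⟨?_, K.starHtpy x, K.continuous_starHtpy x, ?_, ?_, ?_⟩
  · rintro g _ ⟨h, f, hf, rfl⟩
    exact ⟨g * h, f, hf, by rw [mul_smul]⟩
  · intro u
    apply Subtype.ext
    funext v
    simp [starHtpy]
  · intro g u h t
    apply Subtype.ext
    funext v
    rw [smul_apply]
    simp only [starHtpy]
    rw [orbW_sum_smul, orbW_smul, smul_apply]
  · intro u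
    obtain ⟨g, hg⟩ := K.mem_gStar x u.val u.prop
    refine ⟨g, ?_⟩
    have hz : ∀ v, v ≠ K.smul g x → K.orbW x u.val.val v = 0 := by
      intro v hv
      unfold orbW
      split_ifs with hO
      · obtain ⟨h, rfl⟩ := hO
        by_contra hne
        obtain ⟨-, -, s, hs, hsupp⟩ := u.val.prop
        rcases K.face_chain s hs _ (hsupp _ hne) _ (hsupp _ hg) with hl | hl
        · exact hv (K.smul_eq_of_le _ _ _ hl)
        · exact hv (K.smul_eq_of_le _ _ _ hl).symm
      · rfl
    have hS := K.orbW_sum_pos x u.val u.prop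
    have hsum : ∑ v, K.orbW x u.val.val v = K.orbW x u.val.val (K.smul g x) :=
      Finset.sum_eq_single _ (fun v _ hv => hz v hv) (fun h => absurd (Finset.mem_univ _) h)
    apply Subtype.ext
    funext v
    change (g • K.vertexPoint x).val v = _
    rw [smul_apply]
    simp only [starHtpy, vertexPoint]
    by_cases hv : v = K.smul g x
    · subst hv
      rw [← K.smul_mul, inv_mul_cancel, K.smul_one, if_pos rfl, ← hsum, div_self hS.ne']
      simp
    · rw [if_neg, hz v hv]
      · simp
      · intro h
        apply hv
        rw [← h, ← K.smul_mul, mul_inv_cancel, K.smul_one]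

end GOSC

/-- Let `G` be a finite group, `P` a finite `G`-poset, `K = K(P)` its order
complex, and `x` a vertex of `K` (i.e. an element of `P`). Then the saturation `G·star(x)` of
the open star of `x` is a `G`-categorical subset of `|K|`: it is invariant and its inclusion
into `|K|` is `G`-homotopic to a map taking values in the single orbit `O(x)`. -/
theorem gStar_gCategorical (G P : Type) [Group G] [Finite G]
    [Fintype P] [PartialOrder P] [MulAction G P]
    (hmono : ∀ g : G, Monotone (fun p : P => g • p))
    (x : (orderComplexG G P hmono).V) :
    GInvariant G ((orderComplexG G P hmono).gStar x) ∧
      GCategoricalAt G (orderComplexG G P hmono).Real ((orderComplexG G P hmono).gStar x)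
        ((orderComplexG G P hmono).vertexPoint x) := by
  exact GOSC.gStar_aux _ x
end

section
/- Let G be a finite group and K an ordered G-simplicial complex. Then the fixed-point set of the geometric realization equals the realization of the fixed subcomplex: |K|^G = |K^G|. -/
lemma GOSC.smul_eq_of_le_s9 {G : Type} [Group G] [Finite G] (K : GOSC G) (g : G) (v : K.V)
    (h : v ≤ K.smul g v) : K.smul g v = v := by
  have key : ∀ n : ℕ, K.smul g v ≤ K.smul (g ^ (n + 1)) v := by
    intro n
    induction n with
    | zero => simp
    | succ n ih =>
      rw [pow_succ' g (n + 1), K.smul_mul]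
      exact K.smul_mono g _ _ (h.trans ih)
  obtain ⟨n, hn⟩ : ∃ n, orderOf g = n + 1 :=
    Nat.exists_eq_succ_of_ne_zero (orderOf_pos g).ne'
  have h2 := key n
  rw [← hn, pow_orderOf_eq_one, K.smul_one] at h2
  exact le_antisymm h2 h

/-- Let `G` be a finite group and `K` an ordered `G`-simplicial complex.
Then the fixed-point set of the geometric realization equals the (canonically embedded)
realization of the fixed subcomplex `K^G`, i.e. the set of points of `|K|` supported on a
simplex all of whose vertices are fixed by every element of `G`: `|K|^G = |K^G|`. -/
theorem real_fixedPoints (G : Type) [Group G] [Finite G] (K : GOSC G) :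
    {f : K.Real | ∀ g : G, g • f = f} =
      {f : K.Real | ∃ s ∈ K.faces, (∀ v ∈ s, ∀ g : G, K.smul g v = v) ∧
        ∀ v, f.val v ≠ 0 → v ∈ s} := by
  ext f
  simp only [Set.mem_setOf_eq]
  constructor
  · intro hf
    have hval : ∀ (g : G) (v : K.V), f.val (K.smul g v) = f.val v := by
      intro g v
      have h := congrArg (fun x : K.Real => x.val v) (hf g⁻¹)
      simp only [GOSC.smul_apply, inv_inv] at h
      exact h
    obtain ⟨hnn, hsum, s, hs, hsupp⟩ := f.prop
    refine ⟨s.filter (fun v => f.val v ≠ 0), K.down_closed s hs _ (Finset.filter_subset _ _) ?_,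
      ?_, ?_⟩
    · by_contra hne
      rw [Finset.not_nonempty_iff_eq_empty] at hne
      have hz : ∀ v, f.val v = 0 := by
        intro v
        by_contra hv
        have : v ∈ s.filter (fun v => f.val v ≠ 0) := Finset.mem_filter.mpr ⟨hsupp v hv, hv⟩
        rw [hne] at this
        simp at this
      have h0 : (∑ v, f.val v) = 0 := Finset.sum_eq_zero (fun v _ => hz v)
      exact zero_ne_one (h0.symm.trans hsum)
    · intro v hv g
      have hv' := (Finset.mem_filter.mp hv).2
      have hg : K.smul g v ∈ s := hsupp _ (by rw [hval]; exact hv')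
      rcases K.face_chain s hs v (hsupp v hv') _ hg with h | h
      · exact K.smul_eq_of_le_s9 g v h
      · have h3 := K.smul_mono g⁻¹ _ _ h
        rw [← K.smul_mul, inv_mul_cancel, K.smul_one] at h3
        have h4 := congrArg (K.smul g) (K.smul_eq_of_le_s9 g⁻¹ v h3)
        rw [← K.smul_mul, mul_inv_cancel, K.smul_one] at h4
        exact h4.symm
    · intro v hv
      exact Finset.mem_filter.mpr ⟨hsupp v hv, hv⟩
  · rintro ⟨s, hs, hfix, hsupp⟩ g
    apply Subtype.ext
    funext v
    rw [GOSC.smul_apply]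
    by_cases hv : f.val v = 0
    · by_cases hw : f.val (K.smul g⁻¹ v) = 0
      · rw [hv, hw]
      · have h := hfix _ (hsupp _ hw) g
        rw [← K.smul_mul, mul_inv_cancel, K.smul_one] at h
        rw [← h]
    · rw [hfix v (hsupp v hv) g⁻¹]
end

section
/- Let G be a finite group and let X and Y be finite T0 G-spaces. Then the equivariant Lusternik–Schnirelmann category of the product satisfies LS_G(X×Y) ≤ #G · LS_G(X) · LS_G(Y), where X×Y carries the product topology and diagonal G-action. -/
theorem eqLS_aux_orbit {G X : Type*} [Group G] [Finite G] [TopologicalSpace X] [T0Space X]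
    [MulAction G X] [ContinuousConstSMul G X] {x₀ a b : X} (ha : a ∈ MulAction.orbit G x₀)
    (hb : b ∈ MulAction.orbit G x₀) (h : a ⤳ b) : a = b := by
  have hab : b ∈ MulAction.orbit G a := by
    rw [MulAction.orbit_eq_iff.mpr ha]; exact hb
  obtain ⟨g, rfl⟩ := hab
  have h : a ⤳ (g • a) := h
  have hn : ∀ n : ℕ, a ⤳ (g ^ n • a) := by
    intro n
    induction n with
    | zero => simpa using specializes_refl a
    | succ k ih =>
      have h2 : (g ^ k • a) ⤳ (g ^ k • (g • a)) := h.map (continuous_const_smul _)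
      rw [pow_succ, mul_smul]
      exact ih.trans h2
  have h1 : (g • a) ⤳ (g • (g ^ (orderOf g - 1) • a)) :=
    (hn (orderOf g - 1)).map (continuous_const_smul _)
  have h3 : g • (g ^ (orderOf g - 1) • a) = a := by
    rw [← mul_smul, ← pow_succ', Nat.sub_add_cancel (orderOf_pos g), pow_orderOf_eq_one, one_smul]
  rw [h3] at h1
  exact (h.antisymm h1).eq

theorem eqLS_aux_zero {G X : Type*} [Group G] [TopologicalSpace X] [MulAction G X]
    [IsEmpty X] : eqLS G X = 0 := by
  refine le_antisymm (sInf_le ⟨0, by simp, fun i => i.elim0, fun i => i.elim0, fun i => i.elim0,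
    Subsingleton.elim _ _, fun i => i.elim0⟩) (bot_le)

theorem eqLS_aux_cover {G X : Type*} [Group G] [TopologicalSpace X] [MulAction G X]
    (h : eqLS G X ≠ ⊤) : ∃ n : ℕ, eqLS G X = n ∧ ∃ U : Fin n → Set X,
    (∀ i, IsOpen (U i)) ∧ (∀ i, GInvariant G (U i)) ∧ (⋃ i, U i) = Set.univ ∧
    ∀ i, GCategorical G X (U i) := by
  have hne : {k : ℕ∞ | ∃ n : ℕ, k = n ∧ ∃ U : Fin n → Set X,
    (∀ i, IsOpen (U i)) ∧ (∀ i, GInvariant G (U i)) ∧ (⋃ i, U i) = Set.univ ∧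
    ∀ i, GCategorical G X (U i)}.Nonempty := by
    by_contra hc
    rw [Set.not_nonempty_iff_eq_empty] at hc
    apply h
    unfold eqLS
    rw [hc, sInf_empty]
  exact csInf_mem hne

theorem eqLS_aux_isEmpty {G X : Type*} [Group G] [TopologicalSpace X] [MulAction G X]
    (h : eqLS G X = 0) : IsEmpty X := by
  obtain ⟨n, hn, U, -, -, hU, -⟩ := eqLS_aux_cover (G := G) (X := X) (by simp [h])
  have h0 : n = 0 := by
    rw [h] at hn
    exact_mod_cast hn.symm
  subst h0
  refine ⟨fun x => ?_⟩
  have hx : x ∈ ⋃ i, U i := hU ▸ Set.mem_univ x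
  obtain ⟨i, -⟩ := Set.mem_iUnion.mp hx
  exact i.elim0

/-- Let `G` be a finite group and `X`, `Y` finite `T₀` `G`-spaces. Then the
equivariant Lusternik–Schnirelmann category of the product (with the product topology and the
diagonal `G`-action) satisfies `LS_G(X × Y) ≤ #G · LS_G(X) · LS_G(Y)`. -/
theorem eqLS_prod_le (G X Y : Type*) [Group G] [Finite G]
    [TopologicalSpace X] [Finite X] [T0Space X] [MulAction G X] [ContinuousConstSMul G X]
    [TopologicalSpace Y] [Finite Y] [T0Space Y] [MulAction G Y] [ContinuousConstSMul G Y] :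
    eqLS G (X × Y) ≤ (Nat.card G : ℕ∞) * eqLS G X * eqLS G Y := by
  by_cases hX0 : eqLS G X = 0
  · haveI := eqLS_aux_isEmpty hX0
    rw [eqLS_aux_zero]; exact bot_le
  by_cases hY0 : eqLS G Y = 0
  · haveI := eqLS_aux_isEmpty hY0
    rw [eqLS_aux_zero]; exact bot_le
  have hG : (Nat.card G : ℕ∞) ≠ 0 := by
    exact_mod_cast Nat.card_pos.ne'
  by_cases hX : eqLS G X = ⊤
  · rw [hX, ENat.mul_top hG, ENat.top_mul hY0]; exact le_top
  by_cases hY : eqLS G Y = ⊤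
  · rw [hY, ENat.mul_top (mul_ne_zero hG hX0)]; exact le_top
  obtain ⟨n, hn, U, hUo, hUi, hUc, hUg⟩ := eqLS_aux_cover hX
  obtain ⟨m, hm, V, hVo, hVi, hVc, hVg⟩ := eqLS_aux_cover hY
  choose x₀ F hF hF0 hFg hF1 using hUg
  choose y₀ K hK hK0 hKg hK1 using hVg
  rw [hn, hm]
  let e : Fin (Nat.card G * n * m) ≃ (G × Fin n) × Fin m :=
    (Finite.equivFinOfCardEq (by simp [Nat.card_prod])).symm
  let W : (G × Fin n) × Fin m → Set (X × Y) := fun q =>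
    {p | ∃ (hx : p.1 ∈ U q.1.2) (hy : p.2 ∈ V q.2) (k : G),
      F q.1.2 (⟨p.1, hx⟩, 1) = k • x₀ q.1.2 ∧
      K q.2 (⟨p.2, hy⟩, 1) = k • q.1.1 • y₀ q.2}
  refine sInf_le ⟨Nat.card G * n * m, by push_cast; rfl, fun i => W (e i), ?_, ?_, ?_, ?_⟩
  · intro i
    beta_reduce
    generalize e i = q
    rw [isOpen_iff_forall_specializes]
    rintro p p' hpp ⟨hx, hy, k, h1, h2⟩
    have s1 : p.1 ⤳ p'.1 := hpp.map continuous_fst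
    have s2 : p.2 ⤳ p'.2 := hpp.map continuous_snd
    have hx' := s1.mem_open (hUo _) hx
    have hy' := s2.mem_open (hVo _) hy
    have t1 : (⟨p.1, hx'⟩ : U q.1.2) ⤳ ⟨p'.1, hx⟩ := by
      rwa [subtype_specializes_iff]
    have t2 : (⟨p.2, hy'⟩ : V q.2) ⤳ ⟨p'.2, hy⟩ := by
      rwa [subtype_specializes_iff]
    refine ⟨hx', hy', k, ?_, ?_⟩
    · rw [← h1]
      exact eqLS_aux_orbit (hF1 _ _) (hF1 _ _) ((t1.prod (specializes_refl 1)).map (hF _))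
    · rw [← h2]
      exact eqLS_aux_orbit (hK1 _ _) (hK1 _ _) ((t2.prod (specializes_refl 1)).map (hK _))
  · rintro i g p ⟨hx, hy, k, h1, h2⟩
    refine ⟨hUi _ g _ hx, hVi _ g _ hy, g * k, ?_, ?_⟩
    · rw [mul_smul, ← h1]
      exact hFg _ g ⟨p.1, hx⟩ _ 1
    · rw [mul_smul, ← h2]
      exact hKg _ g ⟨p.2, hy⟩ _ 1
  · refine Set.eq_univ_of_forall fun p => ?_
    obtain ⟨i, hi⟩ := Set.mem_iUnion.mp (hUc ▸ Set.mem_univ p.1 : p.1 ∈ ⋃ i, U i)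
    obtain ⟨j, hj⟩ := Set.mem_iUnion.mp (hVc ▸ Set.mem_univ p.2 : p.2 ∈ ⋃ j, V j)
    obtain ⟨a, ha⟩ := hF1 i ⟨p.1, hi⟩
    obtain ⟨b, hb⟩ := hK1 j ⟨p.2, hj⟩
    refine Set.mem_iUnion.mpr ⟨e.symm ((a⁻¹ * b, i), j), ?_⟩
    simp only [Equiv.apply_symm_apply]
    refine ⟨hi, hj, a, ha.symm, ?_⟩
    rw [← mul_smul, mul_inv_cancel_left]
    exact hb.symm
  · intro i
    beta_reduce
    generalize e i = q
    have hx : ∀ p : W q, p.1.1 ∈ U q.1.2 := fun p => p.2.1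
    have hy : ∀ p : W q, p.1.2 ∈ V q.2 := fun p => p.2.2.1
    refine ⟨(x₀ q.1.2, q.1.1 • y₀ q.2),
      fun z => (F q.1.2 (⟨z.1.1.1, hx z.1⟩, z.2), K q.2 (⟨z.1.1.2, hy z.1⟩, z.2)), ?_, ?_, ?_, ?_⟩
    · refine Continuous.prodMk ((hF _).comp ?_) ((hK _).comp ?_)
      · exact Continuous.prodMk (Continuous.subtype_mk (by fun_prop) _) continuous_snd
      · exact Continuous.prodMk (Continuous.subtype_mk (by fun_prop) _) continuous_snd
    · intro u
      exact Prod.ext (hF0 _ _) (hK0 _ _)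
    · intro g u h t
      exact Prod.ext (hFg _ g ⟨u.1.1, hx u⟩ (hx ⟨_, h⟩) t) (hKg _ g ⟨u.1.2, hy u⟩ (hy ⟨_, h⟩) t)
    · rintro ⟨u, hx, hy, k, h1, h2⟩
      exact ⟨k, Prod.ext h1.symm h2.symm⟩
end

section
/- Let G be a finite group acting by homeomorphisms on a finite T0 topological space X, and let x ∈ X. Then the orbit O(x) = {g·x : g ∈ G}, equipped with the subspace topology from X, is discrete. -/
/-- Let `G` be a finite group acting by homeomorphisms on a finite `T₀`
topological space `X`, and let `x ∈ X`. Then the orbit `O(x) = {g • x : g ∈ G}`, equipped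
with the subspace topology from `X`, is discrete. -/
theorem orbit_discrete (G X : Type*) [Group G] [Finite G]
    [TopologicalSpace X] [Finite X] [T0Space X]
    [MulAction G X] [ContinuousConstSMul G X] (x : X) :
    DiscreteTopology (MulAction.orbit G x) := by
  have : T1Space (MulAction.orbit G x) := by
    rw [t1Space_iff_specializes_imp_eq]
    intro y z h
    obtain ⟨g, hg⟩ : ∃ g : G, g • (y : X) = z :=
      MulAction.mem_orbit_iff.1 ((MulAction.orbit_eq_iff.2 y.2).symm ▸ z.2)
    have h1 : (y : X) ⤳ (g • (y : X)) := hg ▸ h.map continuous_subtype_val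
    have h2 : ∀ n : ℕ, (y : X) ⤳ (g ^ n • (y : X)) := by
      intro n
      induction n with
      | zero => simp [specializes_rfl]
      | succ n ih =>
        rw [pow_succ', mul_smul]
        exact h1.trans (ih.map (continuous_const_smul g))
    have h3 : (g • (y : X)) ⤳ (y : X) := by
      have h4 := (h2 (orderOf g - 1)).map (continuous_const_smul g)
      have h5 : g * g ^ (orderOf g - 1) = 1 := by
        rw [← pow_succ', Nat.sub_add_cancel (orderOf_pos g), pow_orderOf_eq_one]
      rwa [← mul_smul, h5, one_smul] at h4
    apply Subtype.ext
    rw [← hg]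
    exact (h1.antisymm h3).eq
  exact Finite.instDiscreteTopology
end

section
/- Let G be a finite group and X a finite T0 G-space. Then LS_G(sd(X)) ≤ LS_G(X): the equivariant Lusternik–Schnirelmann category does not increase under barycentric subdivision. -/
namespace SdAux

open FinGPoset ContinuousMap Classical

variable {G : Type} [Group G]

instance instTop (X : FinGPoset G) : TopologicalSpace X.carrier := downTop X.carrier
instance instAct (X : FinGPoset G) : MulAction G X.carrier := X.mulAction

lemma smul_le (X : FinGPoset G) (g : G) {x y : X.carrier} (h : x ≤ y) : g • x ≤ g • y :=
  X.smul_mono g x y h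

lemma isOpen_iff (X : FinGPoset G) (A : Set X.carrier) :
    IsOpen A ↔ ∀ ⦃a⦄, a ∈ A → ∀ ⦃b⦄, b ≤ a → b ∈ A := Iff.rfl

/-- elements of a chain -/
def el {X : FinGPoset G} (c : X.sd.carrier) : Finset X.carrier := Subtype.val (show chains X.carrier from c)

lemma el_nonempty {X : FinGPoset G} (c : X.sd.carrier) : (el c).Nonempty :=
  (Subtype.prop (show chains X.carrier from c)).1

lemma el_chain {X : FinGPoset G} (c : X.sd.carrier) :
    ∀ x ∈ el c, ∀ y ∈ el c, x ≤ y ∨ y ≤ x :=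
  (Subtype.prop (show chains X.carrier from c)).2

/-- build a chain -/
def mkc {X : FinGPoset G} (s : Finset X.carrier) (h : s.Nonempty)
    (h2 : ∀ x ∈ s, ∀ y ∈ s, x ≤ y ∨ y ≤ x) : X.sd.carrier :=
  show chains X.carrier from ⟨s, h, h2⟩

@[simp] lemma el_mkc {X : FinGPoset G} (s : Finset X.carrier) (h : s.Nonempty)
    (h2 : ∀ x ∈ s, ∀ y ∈ s, x ≤ y ∨ y ≤ x) : el (mkc s h h2) = s := rfl

lemma el_ext {X : FinGPoset G} {c d : X.sd.carrier} (h : el c = el d) : c = d :=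
  Subtype.ext (p := fun c : Finset X.carrier => c.Nonempty ∧ ∀ x ∈ c, ∀ y ∈ c, x ≤ y ∨ y ≤ x) h

lemma el_le {X : FinGPoset G} {c d : X.sd.carrier} : c ≤ d ↔ el c ⊆ el d := Iff.rfl

lemma el_smul {X : FinGPoset G} (g : G) (c : X.sd.carrier) :
    el (g • c) = (el c).image (fun x => g • x) := by
  have : el (g • c) = @Finset.image _ _ (fun a b => Classical.propDecidable _) (X.smul g) (el c) := rfl
  rw [this]
  rfl

lemma continuous_of_mono {X Y : FinGPoset G} (V : Set Y.carrier) (f : V → X.carrier)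
    (hf : Monotone f) : Continuous f := by
  refine ⟨fun A hA => ?_⟩
  rw [isOpen_induced_iff]
  refine ⟨{y | ∃ v : V, f v ∈ A ∧ y ≤ v}, ?_, ?_⟩
  · rintro a ⟨v, hv, hav⟩ b hb
    exact ⟨v, hv, hb.trans hav⟩
  · ext w
    constructor
    · rintro ⟨v, hv, hav⟩
      exact hA hv (hf hav)
    · intro hw
      exact ⟨w, hw, le_rfl⟩

/-- equivariance -/
def Eqv {X Y : FinGPoset G} (V : Set Y.carrier) (f : C(V, X.carrier)) : Prop :=
  ∀ (g : G) (u : V) (h : g • (u : Y.carrier) ∈ V), f ⟨g • (u : Y.carrier), h⟩ = g • f u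

lemma homotopic_of_le {X Y : FinGPoset G} (V : Set Y.carrier) (f k : C(V, X.carrier))
    (hle : ∀ v, f v ≤ k v) (hf : Eqv V f) (hk : Eqv V k) : HomotopicWith k f (Eqv V) := by
  refine ⟨⟨⟨⟨fun p => if p.1 = 0 then k p.2 else f p.2, ?_⟩, ?_, ?_⟩, ?_⟩⟩
  · refine ⟨fun A hA => ?_⟩
    have : (fun p : unitInterval × V => if p.1 = 0 then k p.2 else f p.2) ⁻¹' A =
        (Prod.snd ⁻¹' (k ⁻¹' A)) ∪ ((Prod.fst ⁻¹' {0}ᶜ) ∩ (Prod.snd ⁻¹' (f ⁻¹' A))) := by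
      ext ⟨t, v⟩
      by_cases ht : t = 0
      · simp [ht]
      · simp only [Set.mem_preimage, ht, if_false, Set.mem_union, Set.mem_inter_iff]
        constructor
        · intro h
          exact Or.inr ⟨ht, h⟩
        · rintro (h | h)
          · exact hA h (hle v)
          · exact h.2
    rw [this]
    exact ((hA.preimage k.continuous).preimage continuous_snd).union
      ((isOpen_compl_singleton.preimage continuous_fst).inter
        ((hA.preimage f.continuous).preimage continuous_snd))
  · intro v; simp
  · intro v; simp
  · intro t g u h
    by_cases ht : t = 0
    · simpa [ht] using hk g u h
    · simpa [ht] using hf g u h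

/-- chains inside U -/
def sdSet {X : FinGPoset G} (U : Set X.carrier) : Set X.sd.carrier := {c | ∀ x ∈ el c, x ∈ U}

/-- inclusion -/
def incl {X : FinGPoset G} (V : Set X.carrier) : C(V, X.carrier) := ⟨Subtype.val, continuous_subtype_val⟩

/-- good maps -/
def Good {X : FinGPoset G} (U : Set X.carrier) (f : X.carrier → X.carrier) : Prop :=
  MonotoneOn f U ∧ ∀ (g : G), ∀ x ∈ U, f (g • x) = g • f x

/-- reachable maps -/
def Conn {X : FinGPoset G} (U : Set X.carrier) (f : X.carrier → X.carrier) : Prop :=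
  ∃ φ : C(sdSet U, X.sd.carrier), (∀ c, el (φ c) = (el c.1).image f) ∧ Eqv (sdSet U) φ ∧
    HomotopicWith (incl (sdSet U)) φ (Eqv (sdSet U))

variable {X : FinGPoset G} {U : Set X.carrier}

lemma image_chain {f : X.carrier → X.carrier} (hf : MonotoneOn f U) (c : sdSet U) :
    ∀ x ∈ (el c.1).image f, ∀ y ∈ (el c.1).image f, x ≤ y ∨ y ≤ x := by
  intro x hx y hy
  obtain ⟨a, ha, rfl⟩ := Finset.mem_image.1 hx
  obtain ⟨b, hb, rfl⟩ := Finset.mem_image.1 hy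
  rcases el_chain c.1 a ha b hb with h | h
  · exact Or.inl (hf (c.2 a ha) (c.2 b hb) h)
  · exact Or.inr (hf (c.2 b hb) (c.2 a ha) h)

lemma image_eqv {f : X.carrier → X.carrier} (hf : Good U f) (c : sdSet U) (g : G) :
    (el (g • c.1)).image f = ((el c.1).image f).image (fun x => g • x) := by
  rw [el_smul, Finset.image_image, Finset.image_image]
  exact Finset.image_congr (fun x hx => hf.2 g x (c.2 x hx))

lemma step1 {f k : X.carrier → X.carrier} (hf : Good U f) (hk : Good U k)
    (h : ∀ c : sdSet U, ∀ x ∈ el c.1, ∀ y ∈ el c.1, f x ≤ k y ∨ k y ≤ f x)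
    (hc : Conn U f) : Conn U k := by
  obtain ⟨φ, hφ, hφe, hφh⟩ := hc
  let ψ : C(sdSet U, X.sd.carrier) := ⟨fun c => mkc ((el c.1).image k)
    ((el_nonempty c.1).image k) (image_chain hk.1 c),
    continuous_of_mono _ _ (fun c d hcd => Finset.image_subset_image hcd)⟩
  have hψ : ∀ c, el (ψ c) = (el c.1).image k := fun c => rfl
  have hψe : Eqv (sdSet U) ψ := by
    intro g c hc
    apply el_ext
    rw [hψ, el_smul g (ψ c), hψ c, ← image_eqv hk]
  let θ : C(sdSet U, X.sd.carrier) := ⟨fun c => mkc ((el c.1).image f ∪ (el c.1).image k)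
    (((el_nonempty c.1).image f).mono Finset.subset_union_left) (by
      intro x hx y hy
      rcases Finset.mem_union.1 hx with hx' | hx' <;> rcases Finset.mem_union.1 hy with hy' | hy'
      · exact image_chain hf.1 c x hx' y hy'
      · obtain ⟨a, ha, rfl⟩ := Finset.mem_image.1 hx'
        obtain ⟨b, hb, rfl⟩ := Finset.mem_image.1 hy'
        exact h c a ha b hb
      · obtain ⟨a, ha, rfl⟩ := Finset.mem_image.1 hx'
        obtain ⟨b, hb, rfl⟩ := Finset.mem_image.1 hy'
        exact (h c b hb a ha).symm
      · exact image_chain hk.1 c x hx' y hy'),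
    continuous_of_mono _ _ (fun c d hcd => Finset.union_subset_union
      (Finset.image_subset_image hcd) (Finset.image_subset_image hcd))⟩
  have hθ : ∀ c, el (θ c) = (el c.1).image f ∪ (el c.1).image k := fun c => rfl
  have hθe : Eqv (sdSet U) θ := by
    intro g c hc
    apply el_ext
    rw [hθ, el_smul g (θ c), hθ c, Finset.image_union, ← image_eqv hk, ← image_eqv hf]
  refine ⟨ψ, hψ, hψe, hφh.trans (HomotopicWith.trans
    (homotopic_of_le _ φ θ ?_ hφe hθe).symm (homotopic_of_le _ ψ θ ?_ hψe hθe))⟩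
  · intro c
    rw [el_le, hφ, hθ]
    exact Finset.subset_union_left
  · intro c
    rw [el_le, hψ, hθ]
    exact Finset.subset_union_right

lemma step1_iff {f k : X.carrier → X.carrier} (hf : Good U f) (hk : Good U k)
    (h : ∀ c : sdSet U, ∀ x ∈ el c.1, ∀ y ∈ el c.1, f x ≤ k y ∨ k y ≤ f x) :
    Conn U f ↔ Conn U k :=
  ⟨step1 hf hk h, step1 hk hf (fun c x hx y hy => (h c y hy x hx).symm)⟩

/-- rank -/
noncomputable def rk (x : X.carrier) : ℕ := (Set.Iic x).ncard

lemma rk_lt {x y : X.carrier} (h : x < y) : rk x < rk y :=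
  Set.ncard_lt_ncard (Set.Iic_ssubset_Iic.2 h) (Set.toFinite _)

lemma rk_smul (g : G) (x : X.carrier) : rk (g • x) = rk x := by
  unfold rk
  have : Set.Iic (g • x) = (fun y => g • y) '' Set.Iic x := by
    ext y
    constructor
    · intro hy
      refine ⟨g⁻¹ • y, ?_, by simp⟩
      have := smul_le X g⁻¹ (Set.mem_Iic.1 hy)
      simpa using this
    · rintro ⟨z, hz, rfl⟩
      exact smul_le X g hz
  rw [this, Set.ncard_image_of_injective _ (MulAction.injective g)]

lemma good_mix {f k : X.carrier → X.carrier} (hf : Good U f) (hk : Good U k)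
    (hle : ∀ x ∈ U, f x ≤ k x) (n : ℕ) : Good U (fun x => if rk x < n then f x else k x) := by
  constructor
  · intro x hx y hy hxy
    have hr : rk x ≤ rk y := by
      rcases hxy.eq_or_lt with h | h
      · rw [h]
      · exact (rk_lt h).le
    dsimp only
    split_ifs with h1 h2 h2
    · exact hf.1 hx hy hxy
    · exact (hf.1 hx hy hxy).trans (hle y hy)
    · omega
    · exact hk.1 hx hy hxy
  · intro g x hx
    simp only [rk_smul]
    split_ifs
    · exact hf.2 g x hx
    · exact hk.2 g x hx

lemma step2 {f k : X.carrier → X.carrier} (hf : Good U f) (hk : Good U k)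
    (hle : ∀ x ∈ U, f x ≤ k x) : Conn U f ↔ Conn U k := by
  have key : ∀ n : ℕ, Conn U (fun x => if rk x < n then f x else k x) ↔ Conn U k := by
    intro n
    induction n with
    | zero => simp
    | succ n ih =>
      rw [← ih]
      refine step1_iff (good_mix hf hk hle _) (good_mix hf hk hle _) ?_
      intro c x hx y hy
      have hxU := c.2 x hx
      have hyU := c.2 y hy
      rcases el_chain c.1 x hx y hy with h | h
      · left
        have hr : x = y ∨ rk x < rk y := h.eq_or_lt.imp id rk_lt
        have a1 := hf.1 hxU hyU h
        have a2 := hk.1 hxU hyU h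
        have a3 := hle y hyU
        have a4 := hle x hxU
        split_ifs with h1 h2 h2
        · exact a1
        · exact a1.trans a3
        · rcases hr with rfl | hr
          · omega
          · omega
        · exact a2
      · have a1 := hf.1 hyU hxU h
        have a2 := hk.1 hyU hxU h
        have a3 := hle y hyU
        have a4 := hle x hxU
        rcases h.eq_or_lt with rfl | hlt
        · left
          split_ifs with h1 h2 h2
          · exact le_rfl
          · exact a3
          · omega
          · exact le_rfl
        · have hr := rk_lt hlt
          right
          split_ifs with h1 h2 h2
          · exact a1
          · exact a1.trans a4
          · omega
          · exact a2
  rw [← key (Fintype.card X.carrier + 1)]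
  have : (fun x => if rk x < Fintype.card X.carrier + 1 then f x else k x) = f := by
    funext x
    have : rk x ≤ Fintype.card X.carrier := by
      rw [← Nat.card_eq_fintype_card]
      exact Set.ncard_le_card _
    simp [Nat.lt_succ_of_le this]
  rw [this]

lemma conn_congr {f k : X.carrier → X.carrier} (h : ∀ x ∈ U, f x = k x) (hc : Conn U f) :
    Conn U k := by
  obtain ⟨φ, hφ, r⟩ := hc
  refine ⟨φ, fun c => ?_, r⟩
  rw [hφ]
  exact Finset.image_congr (fun x hx => h x (c.2 x hx))

lemma conn_id : Conn U id := by
  have e : Eqv (sdSet U) (incl (sdSet U)) := fun g u h => rfl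
  exact ⟨incl _, fun c => by simp [incl], e, HomotopicWith.refl _ e⟩

lemma sdSet_inv (hU : GInvariant G U) : GInvariant G (sdSet U) := by
  intro g c hc x hx
  rw [el_smul] at hx
  obtain ⟨a, ha, rfl⟩ := Finset.mem_image.1 hx
  exact hU g a (hc a ha)

lemma orbit_antichain [Finite G] {x₀ x y : X.carrier} (hx : x ∈ MulAction.orbit G x₀)
    (hy : y ∈ MulAction.orbit G x₀) (h : x ≤ y) : x = y := by
  rw [← MulAction.orbit_eq_iff.2 hx] at hy
  obtain ⟨g, rfl⟩ := hy
  dsimp only at h ⊢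
  by_contra hne
  have := rk_lt (lt_of_le_of_ne h hne)
  rw [rk_smul] at this
  omega

lemma main [Finite G] (hUi : GInvariant G U)
    (hc : GCategorical G X.carrier U) :
    GCategorical G X.sd.carrier (sdSet U) := by
  obtain ⟨x₀, F, hF, hF0, hFe, hF1⟩ := hc
  let f : unitInterval → X.carrier → X.carrier := fun t x =>
    if h : x ∈ U then F (⟨x, h⟩, t) else x
  have hfU : ∀ t x (h : x ∈ U), f t x = F (⟨x, h⟩, t) := fun t x h => dif_pos h
  have hgood : ∀ t, Good U (f t) := by
    intro t
    constructor
    · intro x hx y hy hxy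
      rw [hfU t x hx, hfU t y hy]
      have hcont : Continuous (fun u : U => F (u, t)) := by fun_prop
      have ho : IsOpen {z : X.carrier | z ≤ F (⟨y, hy⟩, t)} := fun a ha b hb => le_trans hb ha
      obtain ⟨W, hW, hWe⟩ := isOpen_induced_iff.1 (ho.preimage hcont)
      have hyW : (⟨y, hy⟩ : U) ∈ Subtype.val ⁻¹' W := by
        rw [hWe]; exact le_refl (F (⟨y, hy⟩, t))
      have hxW : (⟨x, hx⟩ : U) ∈ Subtype.val ⁻¹' W := hW hyW hxy
      rw [hWe] at hxW
      exact hxW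
    · intro g x hx
      rw [hfU t x hx, hfU t _ (hUi g x hx)]
      exact hFe g ⟨x, hx⟩ _ t
  have hloc : ∀ t, ∀ᶠ s in nhds t, Conn U (f s) ↔ Conn U (f t) := by
    intro t
    have : ∀ᶠ s in nhds t, ∀ u : U, F (u, s) ≤ F (u, t) := by
      rw [Filter.eventually_all]
      intro u
      have hcont : Continuous (fun s => F (u, s)) := by fun_prop
      have ho : IsOpen {z : X.carrier | z ≤ F (u, t)} := fun a ha b hb => le_trans hb ha
      exact (ho.preimage hcont).mem_nhds (le_refl (F (u, t)))
    filter_upwards [this] with s hs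
    refine step2 (hgood s) (hgood t) (fun x hx => ?_)
    rw [hfU _ x hx, hfU _ x hx]
    exact hs _
  have hclopen : IsClopen {t | Conn U (f t)} := by
    constructor
    · rw [← isOpen_compl_iff, isOpen_iff_mem_nhds]
      intro t ht
      filter_upwards [hloc t] with s hs h
      exact ht (hs.1 h)
    · rw [isOpen_iff_mem_nhds]
      intro t ht
      filter_upwards [hloc t] with s hs
      exact hs.2 ht
  have h0 : Conn U (f 0) := conn_congr (fun x hx => by rw [hfU 0 x hx, hF0]; rfl) conn_id
  have h1 : Conn U (f 1) := by
    have := hclopen.eq_univ ⟨0, h0⟩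
    exact (Set.eq_univ_iff_forall.1 this) 1
  obtain ⟨φ, hφ, hφe, ⟨H⟩⟩ := h1
  refine ⟨mkc {x₀} (Finset.singleton_nonempty _) (by simp), fun p => H (p.2, p.1), ?_, ?_, ?_, ?_⟩
  · exact H.continuous.comp continuous_swap
  · intro u
    exact H.apply_zero u
  · intro g u h t
    exact H.prop t g u h
  · intro u
    dsimp only
    rw [H.apply_one u]
    have horb : ∀ x ∈ el (φ u), x ∈ MulAction.orbit G x₀ := by
      intro x hx
      rw [hφ] at hx
      obtain ⟨a, ha, rfl⟩ := Finset.mem_image.1 hx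
      rw [hfU 1 a (u.2 a ha)]
      exact hF1 _
    obtain ⟨x, hx⟩ := el_nonempty (φ u)
    obtain ⟨g, hg⟩ := horb x hx
    refine ⟨g, ?_⟩
    apply el_ext
    dsimp only
    rw [el_smul, el_mkc, Finset.image_singleton]
    symm
    rw [Finset.eq_singleton_iff_unique_mem]
    dsimp only at hg
    rw [hg]
    refine ⟨hx, fun y hy => ?_⟩
    rcases el_chain _ x hx y hy with h | h
    · exact (orbit_antichain (horb x hx) (horb y hy) h).symm
    · exact orbit_antichain (horb y hy) (horb x hx) h

end SdAux

/-- Let `G` be a finite group and `X` a finite `T₀` `G`-space. Then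
`LS_G(sd(X)) ≤ LS_G(X)`: the equivariant Lusternik–Schnirelmann category does not increase
under barycentric subdivision. -/
theorem LSG_sd_le (G : Type) [Group G] [Finite G] (X : FinGPoset G) :
    X.sd.LSG ≤ X.LSG := by
  refine le_sInf ?_
  rintro k ⟨n, rfl, U, hUo, hUi, hUc, hU⟩
  refine sInf_le ⟨n, rfl, fun i => SdAux.sdSet (U i), ?_, ?_, ?_, ?_⟩
  · intro i c hc d hd x hx
    exact hc x (SdAux.el_le.1 hd hx)
  · intro i
    exact SdAux.sdSet_inv (hUi i)
  · rw [Set.eq_univ_iff_forall]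
    intro c
    obtain ⟨m, hm, hmax⟩ := (SdAux.el c).exists_maximal (SdAux.el_nonempty c)
    obtain ⟨i, hi⟩ := Set.mem_iUnion.1 (hUc.symm ▸ Set.mem_univ m)
    refine Set.mem_iUnion.2 ⟨i, fun x hx => hUo i hi ?_⟩
    rcases SdAux.el_chain c x hx m hm with h | h
    · exact h
    · exact hmax hx h
  · intro i
    exact SdAux.main (hUi i) (hU i)
end
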